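/- arXiv:1406.2270 — 2 statements merged into one kernel-verified Lean document; each statement's English description precedes it below -/
import Mathlib

section
/- Let E be an elliptic curve defined over ℚ (given by a Weierstrass equation with coefficients in ℚ and nonzero discriminant). Then the group E(ℚ) of rational points of E, with the elliptic-curve group law, is a finitely generated abelian group. -/
/-!
Suppose first that `E` has full rational `2`-torsion, at `x = e₁, e₂, e₃`, and let `P` be a point
that is not `2`-torsion. The numbers `x(P) - eᵢ` have differences independent of `P`, and their
product is a square, so away from the finitely many primes dividing some `eᵢ - eⱼ` each of them has
even valuation. Hence their square classes lie in a Selmer group, which is finite because the class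
group is finite and the units are finitely generated. These classes determine `P` modulo `2 E(K)`:
if they agree for `P` and `Q`, then the three values `x(P + Q) - eᵢ` are squares, and explicit
formulas halve such a point. Therefore `E(K) / 2 E(K)` is finite. Finite generation follows by
descent, since the naïve height satisfies the parallelogram law up to a bounded error and only
finitely many points have bounded height.

In general, the argument applies over a splitting field of the `2`-division polynomial, and a
subgroup of a finitely generated abelian group is finitely generated.
-/

open IsDedekindDomain nonZeroDivisors WeierstrassCurve

namespace MordellWeil

theorem finite_of_surjective_of_separates {α β γ : Type*} {q : α → β} (hq : q.Surjective)
    {s : Set α} (hs : s.Finite) {f : α → γ} {t : Set γ} (ht : t.Finite) (hf : Set.MapsTo f sᶜ t)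
    (hsep : ∀ a ∉ s, ∀ b ∉ s, f a = f b → q a = q b) : Finite β := by
  have hgraph : ((fun a ↦ (f a, q a)) '' sᶜ).Finite := by
    refine .of_injOn (f := Prod.fst) (Set.mapsTo_image_iff.mpr hf) ?_ ht
    rintro _ ⟨a, ha, rfl⟩ _ ⟨b, hb, rfl⟩ hab
    exact Prod.ext hab (hsep a ha b hb hab)
  have hcompl : (q '' sᶜ).Finite := by
    simpa only [Set.image_image] using hgraph.image Prod.snd
  rw [← Set.finite_univ_iff, ← Set.image_univ_of_surjective hq, ← Set.union_compl_self s,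
    Set.image_union]
  exact (hs.image q).union hcompl

/-! ### Finiteness of Selmer groups -/

section SelmerGroup

theorem toPrincipalIdeal_ker (R K : Type*) [CommRing R] [IsDomain R] [Field K] [Algebra R K]
    [IsFractionRing R K] :
    (toPrincipalIdeal R K).ker = (Units.map (algebraMap R K : R →* K)).range := by
  ext a
  rw [MonoidHom.mem_ker, toPrincipalIdeal_eq_iff, Units.val_one,
    ← FractionalIdeal.spanSingleton_one, eq_comm, FractionalIdeal.spanSingleton_eq_spanSingleton]
  simp only [Units.smul_def, Algebra.smul_def, mul_one, MonoidHom.mem_range, Units.ext_iff,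
    Units.coe_map, MonoidHom.coe_coe]

variable {R K : Type*} [CommRing R] [IsDedekindDomain R] [Field K] [Algebra R K]
  [IsFractionRing R K] {S : Set (HeightOneSpectrum R)} {n : ℕ}

theorem valuationOfNeZeroMod_mk (v : HeightOneSpectrum R) (n : ℕ) (a : Kˣ) :
    v.valuationOfNeZeroMod n (a : Kˣ ⧸ (powMonoidHom n).range) =
      Multiplicative.ofAdd ((v.valuationOfNeZero a).toAdd : ZMod n) :=
  rfl

theorem exists_pow_eq_of_dvd_count {I : FractionalIdeal R⁰ K} (hI : I ≠ 0) (hn : n ≠ 0)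
    (h : ∀ v : HeightOneSpectrum R, (n : ℤ) ∣ FractionalIdeal.count K v I) :
    ∃ J : FractionalIdeal R⁰ K, J ^ n = I := by
  choose m hm using h
  refine ⟨∏ᶠ v : HeightOneSpectrum R, (v.asIdeal : FractionalIdeal R⁰ K) ^ m v, ?_⟩
  have hsupp : Function.HasFiniteMulSupport fun v : HeightOneSpectrum R ↦
      (v.asIdeal : FractionalIdeal R⁰ K) ^ m v := by
    refine (FractionalIdeal.finite_factors I).subset fun v hv hv0 ↦ hv ?_
    have : m v = 0 := by simpa [hn] using (hm v).symm.trans hv0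
    simp [this]
  rw [finprod_pow hsupp]
  conv_rhs => rw [← FractionalIdeal.finprod_heightOneSpectrum_factorization' K hI]
  refine finprod_congr fun v ↦ ?_
  rw [hm, mul_comm, zpow_mul, zpow_natCast]

theorem valuation_eq_exp_neg_count (v : HeightOneSpectrum R) {a : K} (ha : a ≠ 0) :
    v.valuation K a = WithZero.exp (-FractionalIdeal.count K v (.spanSingleton R⁰ a)) := by
  obtain ⟨n, d, hd, rfl⟩ := IsFractionRing.div_surjective (A := R) a
  have hd0 : d ≠ 0 := nonZeroDivisors.ne_zero hd
  have hn0 : n ≠ 0 := by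
    rintro rfl
    simp at ha
  have hspan : FractionalIdeal.spanSingleton R⁰ (algebraMap R K n / algebraMap R K d) =
      .spanSingleton R⁰ (algebraMap R K d)⁻¹ * (Ideal.span {n} : Ideal R) := by
    rw [FractionalIdeal.coeIdeal_span_singleton, FractionalIdeal.spanSingleton_mul_spanSingleton,
      div_eq_inv_mul]
  rw [FractionalIdeal.count_well_defined K v (FractionalIdeal.spanSingleton_ne_zero_iff.mpr ha)
    hspan, map_div₀, v.valuation_of_algebraMap, v.valuation_of_algebraMap,
    v.intValuation_if_neg hn0, v.intValuation_if_neg hd0, ← WithZero.exp_sub, neg_sub_neg, neg_sub]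

theorem toAdd_valuationOfNeZero (v : HeightOneSpectrum R) (a : Kˣ) :
    (v.valuationOfNeZero a).toAdd = -FractionalIdeal.count K v (.spanSingleton R⁰ (a : K)) :=
  WithZero.coe_injective <|
    (v.valuationOfNeZero_eq a).trans (valuation_eq_exp_neg_count v a.ne_zero)

theorem exists_pow_eq_toPrincipalIdeal (hn : n ≠ 0) {a : Kˣ}
    (ha : (a : Kˣ ⧸ (powMonoidHom n).range) ∈
      selmerGroup (S := (∅ : Set (HeightOneSpectrum R)))) :
    ∃ I : (FractionalIdeal R⁰ K)ˣ, I ^ n = toPrincipalIdeal R K a := by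
  have hdvd (v : HeightOneSpectrum R) :
      (n : ℤ) ∣ FractionalIdeal.count K v (.spanSingleton R⁰ (a : K)) := by
    have h := ha v (Set.notMem_empty v)
    rwa [valuationOfNeZeroMod_mk, ofAdd_eq_one, ZMod.intCast_zmod_eq_zero_iff_dvd,
      toAdd_valuationOfNeZero, dvd_neg] at h
  obtain ⟨J, hJ⟩ := exists_pow_eq_of_dvd_count
    (FractionalIdeal.spanSingleton_ne_zero_iff.mpr a.ne_zero) hn hdvd
  rw [← coe_toPrincipalIdeal] at hJ
  have hJ_unit : IsUnit J := (isUnit_pow_iff hn).mp (hJ ▸ (toPrincipalIdeal R K a).isUnit)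
  exact ⟨hJ_unit.unit, Units.ext hJ⟩

theorem finite_range_fromUnit [Group.FG Rˣ] (hn : n ≠ 0) :
    Finite (selmerGroup.fromUnit (R := R) (K := K) (n := n)).range := by
  have : Fact (0 < n) := ⟨hn.pos⟩
  have := Subgroup.finiteIndex_range_powMonoidHom_of_fg Rˣ hn
  rw [← selmerGroup.fromUnit_ker (K := K)] at this
  exact .of_equiv _ (QuotientGroup.quotientKerEquivRange selmerGroup.fromUnit).toEquiv

theorem finiteIndex_range_fromUnit [Finite (ClassGroup R)] (hn : n ≠ 0) :
    (selmerGroup.fromUnit (R := R) (K := K) (n := n)).range.FiniteIndex := by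
  have : Finite ((FractionalIdeal R⁰ K)ˣ ⧸ (toPrincipalIdeal R K).range) :=
    .of_equiv _ (ClassGroup.equiv K).toEquiv
  have hroot (x : selmerGroup (S := (∅ : Set (HeightOneSpectrum R))) (K := K) (n := n)) :
      ∃ (a : Kˣ) (I : (FractionalIdeal R⁰ K)ˣ),
        (a : Kˣ ⧸ (powMonoidHom n).range) = x ∧ I ^ n = toPrincipalIdeal R K a := by
    obtain ⟨a, ha⟩ := QuotientGroup.mk_surjective (x : Kˣ ⧸ (powMonoidHom n).range)
    obtain ⟨I, hI⟩ := exists_pow_eq_toPrincipalIdeal hn (ha ▸ x.2)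
    exact ⟨a, I, ha, hI⟩
  choose a I ha hI using hroot
  rw [Subgroup.finiteIndex_iff_finite_quotient]
  refine finite_of_surjective_of_separates QuotientGroup.mk_surjective Set.finite_empty
    (f := fun x ↦ (I x : (FractionalIdeal R⁰ K)ˣ ⧸ (toPrincipalIdeal R K).range)) Set.finite_univ
    (Set.mapsTo_univ _ _) fun x _ y _ hxy ↦ ?_
  obtain ⟨b, hb⟩ := QuotientGroup.eq.mp hxy
  have hker : (a x)⁻¹ * a y / b ^ n ∈ (toPrincipalIdeal R K).ker := by
    rw [MonoidHom.mem_ker, map_div, map_mul, map_inv, map_pow, hb, ← hI, ← hI, mul_pow, inv_pow,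
      div_self']
  rw [toPrincipalIdeal_ker] at hker
  obtain ⟨u, hu⟩ := hker
  refine QuotientGroup.eq.mpr ⟨u, Subtype.ext ?_⟩
  have hb_pow : ((b ^ n : Kˣ) : Kˣ ⧸ (powMonoidHom n).range) = 1 :=
    (QuotientGroup.eq_one_iff _).mpr ⟨b, rfl⟩
  calc ((Units.map (algebraMap R K : R →* K) u : Kˣ) : Kˣ ⧸ (powMonoidHom n).range)
    _ = (x : Kˣ ⧸ (powMonoidHom n).range)⁻¹ * y := by
      rw [hu, QuotientGroup.mk_div, QuotientGroup.mk_mul, QuotientGroup.mk_inv, hb_pow, div_one,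
        ha, ha]

theorem finite_selmerGroup_empty [Finite (ClassGroup R)] [Group.FG Rˣ] (hn : n ≠ 0) :
    Finite (selmerGroup (S := (∅ : Set (HeightOneSpectrum R))) (K := K) (n := n)) :=
  (Subgroup.finite_iff_finite_and_finiteIndex selmerGroup.fromUnit.range).mpr
    ⟨finite_range_fromUnit hn, finiteIndex_range_fromUnit hn⟩

theorem finite_selmerGroup [Finite (ClassGroup R)] [Group.FG Rˣ] (hS : S.Finite) (hn : n ≠ 0) :
    Finite (selmerGroup (S := S) (K := K) (n := n)) := by
  have := hS.to_subtype
  have : NeZero n := ⟨hn⟩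
  have := finite_selmerGroup_empty (R := R) (K := K) hn
  have hker : Finite (selmerGroup.valuation (S := S) (K := K) (n := n)).ker := by
    rw [selmerGroup.valuation_ker_eq]
    exact .of_equiv _ (Subgroup.subgroupOfEquivOfLe
      (selmerGroup.monotone (Set.empty_subset S))).symm.toEquiv
  have hindex : (selmerGroup.valuation (S := S) (K := K) (n := n)).ker.FiniteIndex := inferInstance
  exact (Subgroup.finite_iff_finite_and_finiteIndex _).mpr ⟨hker, hindex⟩

end SelmerGroup

section Valuation

variable {R K : Type*} [CommRing R] [IsDedekindDomain R] [Field K] [Algebra R K]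
  [IsFractionRing R K] {n : ℕ}

theorem valuationOfNeZeroMod_eq_of_valuation_eq {v : HeightOneSpectrum R} {a b : Kˣ}
    (h : v.valuation K (a : K) = v.valuation K (b : K)) :
    v.valuationOfNeZeroMod n (a : Kˣ ⧸ (powMonoidHom n).range) =
      v.valuationOfNeZeroMod n (b : Kˣ ⧸ (powMonoidHom n).range) := by
  have hab : v.valuationOfNeZero a = v.valuationOfNeZero b := by
    rw [← WithZero.coe_inj, v.valuationOfNeZero_eq, v.valuationOfNeZero_eq, h]
  rw [valuationOfNeZeroMod_mk, valuationOfNeZeroMod_mk, hab]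

theorem valuationOfNeZeroMod_eq_one_of_valuation_eq_one {v : HeightOneSpectrum R} {a : Kˣ}
    (h : v.valuation K (a : K) = 1) :
    v.valuationOfNeZeroMod n (a : Kˣ ⧸ (powMonoidHom n).range) = 1 := by
  rw [valuationOfNeZeroMod_eq_of_valuation_eq (b := 1) (by rw [h, Units.val_one, map_one]),
    QuotientGroup.mk_one, map_one]

theorem mk_mem_selmerGroup_of_prod_eq_pow {ι : Type*} [Fintype ι] {S : Set (HeightOneSpectrum R)}
    (hcard : Fintype.card ι ≡ 1 [MOD n]) {a : ι → Kˣ} {y : Kˣ} (hprod : ∏ i, a i = y ^ n)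
    (hS : ∀ v ∉ S, ∀ i j, i ≠ j → v.valuation K (a i - a j : K) = 1) (i : ι) :
    (a i : Kˣ ⧸ (powMonoidHom n).range) ∈ selmerGroup (S := S) := by
  intro v hv
  have hpow (b : Kˣ) : (b : Kˣ ⧸ (powMonoidHom n).range) ^ n = 1 :=
    (QuotientGroup.eq_one_iff _).mpr ⟨b, rfl⟩
  have hprod_val : ∏ j, v.valuationOfNeZeroMod n (a j : Kˣ ⧸ (powMonoidHom n).range) = 1 := by
    rw [← map_prod, ← QuotientGroup.mk_prod, hprod, QuotientGroup.mk_pow, hpow, map_one]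
  have hsub (j : ι) : (a j : K) = a i - (a i - a j) := (sub_sub_cancel _ _).symm
  rcases lt_trichotomy (v.valuation K (a i : K)) 1 with hlt | heq | hgt
  · rwa [Fintype.prod_eq_single i fun j hj ↦ ?_] at hprod_val
    have hij := hS v hv i j hj.symm
    refine valuationOfNeZeroMod_eq_one_of_valuation_eq_one ?_
    rw [hsub, Valuation.map_sub_eq_of_lt_right _ (by rwa [hij]), hij]
  · exact valuationOfNeZeroMod_eq_one_of_valuation_eq_one heq
  · have hall (j : ι) : v.valuation K (a j : K) = v.valuation K (a i : K) := by
      obtain rfl | hj := eq_or_ne j i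
      · rfl
      · rw [hsub, Valuation.map_sub_eq_of_lt_left _ (by rwa [hS v hv i j hj.symm])]
    rw [Fintype.prod_congr _ _ fun j ↦ valuationOfNeZeroMod_eq_of_valuation_eq (hall j),
      Finset.prod_const, Finset.card_univ, ← map_pow, pow_eq_pow_of_modEq hcard (hpow (a i)),
      pow_one] at hprod_val
    exact hprod_val

variable (R) in
theorem finite_setOf_valuation_ne_one {a : K} (ha : a ≠ 0) :
    {v : HeightOneSpectrum R | v.valuation K a ≠ 1}.Finite := by
  refine ((HeightOneSpectrum.Support.finite R a).union
    (HeightOneSpectrum.Support.finite R a⁻¹)).subset fun v hv ↦ ?_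
  rcases lt_or_gt_of_ne hv with hlt | hgt
  · refine Or.inr (show 1 < v.valuation K a⁻¹ from ?_)
    rw [map_inv₀]
    exact (one_lt_inv₀ (zero_lt_iff.mpr ((Valuation.ne_zero_iff _).mpr ha))).mpr hlt
  · exact Or.inl hgt

end Valuation

/-! ### Descent through full rational `2`-torsion -/

section TwoDescent

variable {K : Type*} [Field K] {W : WeierstrassCurve K} {e : Fin 3 → K}

/-- The `2`-division polynomial `4X³ + b₂X² + 2b₄X + b₆` of `W` factors as
`4(X - e 0)(X - e 1)(X - e 2)`, expressed by comparing coefficients; the middle one is halved, which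
matters only in characteristic `2`. For `W` elliptic this says that `W` has full rational
`2`-torsion. -/
structure HasTwoTorsionRoots (W : WeierstrassCurve K) (e : Fin 3 → K) : Prop where
  b₂_eq : W.b₂ = -4 * (e 0 + e 1 + e 2)
  b₄_eq : W.b₄ = 2 * (e 0 * e 1 + e 0 * e 2 + e 1 * e 2)
  b₆_eq : W.b₆ = -4 * (e 0 * e 1 * e 2)

theorem isSquare_four_mul_addX_sub_mul [DecidableEq K] {x₁ x₂ y₁ y₂ r : K}
    (h₁ : W.toAffine.Equation x₁ y₁) (h₂ : W.toAffine.Equation x₂ y₂) (hx : x₁ ≠ x₂)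
    (hr : 4 * r ^ 3 + W.b₂ * r ^ 2 + 2 * W.b₄ * r + W.b₆ = 0) :
    IsSquare (4 * ((W.toAffine.addX x₁ x₂ (W.toAffine.slope x₁ x₂ y₁ y₂) - r) *
      ((x₁ - r) * (x₂ - r)))) := by
  set ℓ := W.toAffine.slope x₁ x₂ y₁ y₂ with hℓ
  have hchord := congrArg (Polynomial.eval r) (Affine.addPolynomial_slope h₁ h₂ fun h ↦ hx h.1)
  rw [← hℓ] at hchord
  simp only [Affine.addPolynomial_eq, Cubic.toPoly, Polynomial.eval_add, Polynomial.eval_mul,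
    Polynomial.eval_pow, Polynomial.eval_neg, Polynomial.eval_sub, Polynomial.eval_X,
    Polynomial.eval_C, map_neg, map_add, map_sub, map_mul, map_pow] at hchord
  rw [b₂, b₄, b₆] at hr
  refine ⟨2 * (ℓ * (r - x₁) + y₁) + W.a₁ * r + W.a₃, ?_⟩
  simp only [Affine.addX] at hchord ⊢
  linear_combination -4 * hchord - hr

namespace HasTwoTorsionRoots

theorem Δ_eq (he : HasTwoTorsionRoots W e) :
    W.Δ = 16 * ((e 0 - e 1) * (e 0 - e 2) * (e 1 - e 2)) ^ 2 := by
  have h₈ := W.b_relation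
  rw [he.b₂_eq, he.b₄_eq, he.b₆_eq] at h₈
  rw [Δ, he.b₂_eq, he.b₄_eq, he.b₆_eq]
  linear_combination -4 * (e 0 + e 1 + e 2) ^ 2 * h₈

protected theorem two_ne_zero [W.IsElliptic] (he : HasTwoTorsionRoots W e) :
    (2 : K) ≠ 0 := fun h2 ↦
  W.isUnit_Δ.ne_zero <| by
    rw [he.Δ_eq]
    linear_combination 8 * ((e 0 - e 1) * (e 0 - e 2) * (e 1 - e 2)) ^ 2 * h2

protected theorem injective [W.IsElliptic] (he : HasTwoTorsionRoots W e) :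
    Function.Injective e := by
  have hΔ := W.isUnit_Δ.ne_zero
  rw [he.Δ_eq] at hΔ
  intro i j hij
  contrapose! hΔ
  fin_cases i <;> fin_cases j <;> simp_all

theorem eval_root (he : HasTwoTorsionRoots W e) (i : Fin 3) :
    4 * e i ^ 3 + W.b₂ * e i ^ 2 + 2 * W.b₄ * e i + W.b₆ = 0 := by
  have hprod : (e i - e 0) * (e i - e 1) * (e i - e 2) = 0 := by
    fin_cases i <;> simp
  rw [he.b₂_eq, he.b₄_eq, he.b₆_eq]
  linear_combination 4 * hprod

theorem equation_iff_sq_eq [W.IsElliptic] (he : HasTwoTorsionRoots W e) {x y : K} :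
    W.toAffine.Equation x y ↔
      (2 * y + W.a₁ * x + W.a₃) ^ 2 = 4 * ((x - e 0) * (x - e 1) * (x - e 2)) := by
  have h₂ := he.b₂_eq
  have h₄ := he.b₄_eq
  have h₆ := he.b₆_eq
  rw [b₂] at h₂
  rw [b₄] at h₄
  rw [b₆] at h₆
  rw [Affine.equation_iff, ← mul_right_inj' (mul_ne_zero he.two_ne_zero he.two_ne_zero)]
  constructor <;> intro h
  · linear_combination h + x ^ 2 * h₂ + 2 * x * h₄ + h₆
  · linear_combination h - x ^ 2 * h₂ - 2 * x * h₄ - h₆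

theorem neg_some_eq_self_iff [W.IsElliptic] (he : HasTwoTorsionRoots W e) {x y : K}
    (h : W.toAffine.Nonsingular x y) :
    -Affine.Point.some x y h = .some x y h ↔ ∃ i, x = e i := by
  have hroots : (∃ i, x = e i) ↔ (2 * y + W.a₁ * x + W.a₃) ^ 2 = 0 := by
    rw [he.equation_iff_sq_eq.mp h.1, Fin.exists_fin_succ, Fin.exists_fin_two]
    simp [he.two_ne_zero, sub_eq_zero, or_assoc, show (4 : K) = 2 * 2 by norm_num]
  rw [hroots, sq_eq_zero_iff, Affine.Point.neg_some, Affine.Point.some.injEq, Affine.negY]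
  constructor
  · rintro ⟨-, hy⟩
    linear_combination -hy
  · exact fun hy ↦ ⟨rfl, by linear_combination -hy⟩

theorem sqrt_add_sqrt_ne_zero [W.IsElliptic] (he : HasTwoTorsionRoots W e) {x : K}
    {t : Fin 3 → K} (ht : ∀ i, x - e i = t i ^ 2) {i j : Fin 3} (hij : i ≠ j) :
    t i + t j ≠ 0 := fun h ↦
  hij <| he.injective <| by linear_combination ht j - ht i - (t i - t j) * h

theorem exists_sqrt_mul_eq [W.IsElliptic] (he : HasTwoTorsionRoots W e) {x y : K}
    (h : W.toAffine.Equation x y) (hsq : ∀ i, IsSquare (x - e i)) :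
    ∃ t : Fin 3 → K, (∀ i, x - e i = t i ^ 2) ∧
      2 * y + W.a₁ * x + W.a₃ = 2 * (t 0 * t 1 * t 2) := by
  choose t ht using fun i ↦ (hsq i).exists_sq
  have hy : (2 * y + W.a₁ * x + W.a₃) ^ 2 = (2 * (t 0 * t 1 * t 2)) ^ 2 := by
    rw [he.equation_iff_sq_eq.mp h, ht, ht, ht]
    ring
  rcases sq_eq_sq_iff_eq_or_eq_neg.mp hy with hpos | hneg
  · exact ⟨t, ht, hpos⟩
  · refine ⟨-t, fun i ↦ by rw [ht, Pi.neg_apply, neg_sq], hneg.trans ?_⟩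
    simp only [Pi.neg_apply]
    ring

end HasTwoTorsionRoots

/-- The `x`-coordinate of a point whose double has `x`-coordinate `x`, given square roots `t i` of
the three values `x - e i`. -/
def halfX (x : K) (t : Fin 3 → K) : K :=
  x + (t 0 * t 1 + t 0 * t 2 + t 1 * t 2)

/-- The `y`-coordinate accompanying `halfX`. The division by `2` has its intended meaning because
the characteristic is not `2` wherever this is used. -/
def halfY (W : WeierstrassCurve K) (x : K) (t : Fin 3 → K) : K :=
  (2 * ((t 0 + t 1) * (t 0 + t 2) * (t 1 + t 2)) - W.a₁ * halfX x t - W.a₃) / 2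

theorem two_mul_halfY (h2 : (2 : K) ≠ 0) (x : K) (t : Fin 3 → K) :
    2 * halfY W x t + W.a₁ * halfX x t + W.a₃ =
      2 * ((t 0 + t 1) * (t 0 + t 2) * (t 1 + t 2)) := by
  rw [halfY, mul_div_cancel₀ _ h2]
  ring

namespace HasTwoTorsionRoots

variable [W.IsElliptic] {x : K} {t : Fin 3 → K}

theorem equation_half (he : HasTwoTorsionRoots W e) (ht : ∀ i, x - e i = t i ^ 2) :
    W.toAffine.Equation (halfX x t) (halfY W x t) := by
  have h0 : halfX x t - e 0 = (t 0 + t 1) * (t 0 + t 2) := by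
    rw [halfX]
    linear_combination ht 0
  have h1 : halfX x t - e 1 = (t 0 + t 1) * (t 1 + t 2) := by
    rw [halfX]
    linear_combination ht 1
  have h2 : halfX x t - e 2 = (t 0 + t 2) * (t 1 + t 2) := by
    rw [halfX]
    linear_combination ht 2
  rw [he.equation_iff_sq_eq, two_mul_halfY he.two_ne_zero, h0, h1, h2]
  ring

theorem halfY_sub_negY (he : HasTwoTorsionRoots W e) :
    halfY W x t - W.toAffine.negY (halfX x t) (halfY W x t) =
      2 * ((t 0 + t 1) * (t 0 + t 2) * (t 1 + t 2)) := by
  rw [Affine.negY, ← two_mul_halfY he.two_ne_zero]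
  ring

theorem halfY_ne_negY (he : HasTwoTorsionRoots W e) (ht : ∀ i, x - e i = t i ^ 2) :
    halfY W x t ≠ W.toAffine.negY (halfX x t) (halfY W x t) := by
  rw [← sub_ne_zero, he.halfY_sub_negY]
  exact mul_ne_zero he.two_ne_zero <| mul_ne_zero (mul_ne_zero
    (he.sqrt_add_sqrt_ne_zero ht (by decide)) (he.sqrt_add_sqrt_ne_zero ht (by decide)))
    (he.sqrt_add_sqrt_ne_zero ht (by decide))

variable [DecidableEq K]

theorem two_mul_slope_half (he : HasTwoTorsionRoots W e) (ht : ∀ i, x - e i = t i ^ 2) :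
    2 * W.toAffine.slope (halfX x t) (halfX x t) (halfY W x t) (halfY W x t) =
      2 * (t 0 + t 1 + t 2) - W.a₁ := by
  have hY := he.halfY_ne_negY ht
  have hY_sub := sub_ne_zero.mpr hY
  have he_eq (i : Fin 3) : e i = x - t i ^ 2 := by linear_combination -ht i
  have h₂ := he.b₂_eq
  have h₄ := he.b₄_eq
  rw [b₂, he_eq, he_eq, he_eq] at h₂
  rw [b₄, he_eq, he_eq, he_eq] at h₄
  have hw := two_mul_halfY (W := W) he.two_ne_zero x t
  rw [Affine.slope_of_Y_ne rfl hY, mul_div_assoc', div_eq_iff hY_sub, he.halfY_sub_negY]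
  refine mul_left_cancel₀ he.two_ne_zero ?_
  rw [halfX] at hw ⊢
  linear_combination -2 * W.a₁ * hw + 2 * (x + (t 0 * t 1 + t 0 * t 2 + t 1 * t 2)) * h₂ + 2 * h₄

theorem addX_half (he : HasTwoTorsionRoots W e) (ht : ∀ i, x - e i = t i ^ 2) :
    W.toAffine.addX (halfX x t) (halfX x t)
      (W.toAffine.slope (halfX x t) (halfX x t) (halfY W x t) (halfY W x t)) = x := by
  have hslope := he.two_mul_slope_half ht
  have he_eq (i : Fin 3) : e i = x - t i ^ 2 := by linear_combination -ht i
  have h₂ := he.b₂_eq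
  rw [b₂, he_eq, he_eq, he_eq] at h₂
  refine mul_left_cancel₀ (mul_ne_zero he.two_ne_zero he.two_ne_zero) ?_
  generalize W.toAffine.slope (halfX x t) (halfX x t) (halfY W x t) (halfY W x t) = ℓ at hslope ⊢
  rw [Affine.addX, halfX]
  linear_combination (2 * ℓ + 2 * (t 0 + t 1 + t 2) + W.a₁) * hslope - h₂

theorem exists_add_self_eq (he : HasTwoTorsionRoots W e) {y : K} (h : W.toAffine.Nonsingular x y)
    (hsq : ∀ i, IsSquare (x - e i)) : ∃ Q : W.toAffine.Point, Q + Q = .some x y h := by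
  obtain ⟨t, ht, hy⟩ := he.exists_sqrt_mul_eq h.1 hsq
  refine ⟨.some _ _ (Affine.equation_iff_nonsingular.mp (he.equation_half ht)), ?_⟩
  rw [Affine.Point.add_self_of_Y_ne (he.halfY_ne_negY ht), Affine.Point.some.injEq]
  refine ⟨he.addX_half ht, mul_left_cancel₀ he.two_ne_zero ?_⟩
  rw [Affine.addY, Affine.negAddY, he.addX_half ht, Affine.negY]
  have hw := two_mul_halfY (W := W) he.two_ne_zero x t
  have hu : halfX x t = x + (t 0 * t 1 + t 0 * t 2 + t 1 * t 2) := rfl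
  linear_combination -hw - hy - (x - halfX x t) * he.two_mul_slope_half ht +
    2 * (t 0 + t 1 + t 2) * hu

theorem sub_mem_range_two_nsmul (he : HasTwoTorsionRoots W e) {x₁ x₂ y₁ y₂ : K}
    (h₁ : W.toAffine.Nonsingular x₁ y₁) (h₂ : W.toAffine.Nonsingular x₂ y₂)
    (hne : ∀ i, (x₁ - e i) * (x₂ - e i) ≠ 0) (hsq : ∀ i, IsSquare ((x₁ - e i) * (x₂ - e i))) :
    Affine.Point.some x₁ y₁ h₁ - .some x₂ y₂ h₂ ∈
      (nsmulAddMonoidHom (α := W.toAffine.Point) 2).range := by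
  by_cases hx : x₁ = x₂
  · rcases Affine.Point.X_eq_iff (h₁ := h₁) (h₂ := h₂) |>.mp hx with h | h
    · rw [h, sub_self]
      exact zero_mem _
    · exact ⟨-.some x₂ y₂ h₂, by rw [h, nsmulAddMonoidHom_apply, two_nsmul, sub_eq_add_neg]⟩
  · have hroot (i : Fin 3) :
        IsSquare (W.toAffine.addX x₁ x₂ (W.toAffine.slope x₁ x₂ y₁ y₂) - e i) := by
      have h4 : (4 : K) = 2 * 2 := by norm_num
      have h4_ne : (4 : K) ≠ 0 := h4 ▸ mul_ne_zero he.two_ne_zero he.two_ne_zero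
      rw [← mul_div_cancel_right₀ (Affine.addX _ _ _ _ - e i) (hne i),
        ← mul_div_mul_left _ _ h4_ne]
      exact (isSquare_four_mul_addX_sub_mul h₁.1 h₂.1 hx (he.eval_root i)).div
        (IsSquare.mul ⟨2, h4⟩ (hsq i))
    obtain ⟨Q, hQ⟩ := he.exists_add_self_eq (Affine.nonsingular_add h₁ h₂ fun h ↦ hx h.1) hroot
    rw [← Affine.Point.add_of_X_ne (h₁ := h₁) (h₂ := h₂) hx] at hQ
    refine ⟨Q - .some x₂ y₂ h₂, ?_⟩
    rw [nsmulAddMonoidHom_apply, nsmul_sub, two_nsmul, hQ, two_nsmul]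
    abel

end HasTwoTorsionRoots

theorem finite_setOf_xRep_mem (W : Affine K) {T : Set (Fin 2 → K)} (hT : T.Finite) :
    {P : W.Point | P.xRep ∈ T}.Finite := by
  refine hT.preimage' fun t _ ↦ ?_
  rcases Set.eq_empty_or_nonempty (Affine.Point.xRep ⁻¹' {t} : Set W.Point) with h | ⟨P, hP⟩
  · rw [h]
    exact Set.finite_empty
  · exact (Set.toFinite {P, -P}).subset fun Q hQ ↦
      Affine.Point.eq_or_eq_neg_of_xRep_eq_xRep (hQ.trans hP.symm)

theorem HasTwoTorsionRoots.finite_setOf_neg_eq_self [W.IsElliptic] (he : HasTwoTorsionRoots W e) :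
    {P : W.toAffine.Point | -P = P}.Finite := by
  have hT : (insert ![1, 0] (Set.range fun i ↦ ![e i, 1])).Finite := (Set.finite_range _).insert _
  refine (finite_setOf_xRep_mem W.toAffine hT).subset fun P hP ↦ ?_
  rcases P with _ | ⟨x, y, h⟩
  · exact Set.mem_insert _ _
  · obtain ⟨i, rfl⟩ := (he.neg_some_eq_self_iff h).mp hP
    exact Set.mem_insert_of_mem _ ⟨i, rfl⟩

/-- The `2`-descent map, sending `P` to the square classes of the three values `x(P) - e i`. It
takes the junk value `1` at the point at infinity and in the coordinates with `x(P) = e i`, so it is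
meaningful only away from the `2`-torsion. -/
def twoDescentMap [DecidableEq K] (W : WeierstrassCurve K) (e : Fin 3 → K) :
    W.toAffine.Point → Fin 3 → Kˣ ⧸ (powMonoidHom 2 : Kˣ →* Kˣ).range
  | .zero => 1
  | .some x _ _ => fun i ↦ if hx : x - e i ≠ 0 then ↑(Units.mk0 _ hx) else 1

theorem twoDescentMap_some [DecidableEq K] {x y : K} (h : W.toAffine.Nonsingular x y)
    {a : Fin 3 → Kˣ} (ha : ∀ i, (a i : K) = x - e i) :
    twoDescentMap W e (.some x y h) = fun i ↦ ↑(a i) := by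
  funext i
  have hx : x - e i ≠ 0 := ha i ▸ (a i).ne_zero
  exact (dif_pos hx).trans (congrArg _ (Units.ext (ha i).symm))

theorem HasTwoTorsionRoots.exists_units_of_neg_ne [W.IsElliptic] (he : HasTwoTorsionRoots W e)
    {P : W.toAffine.Point} (hP : -P ≠ P) :
    ∃ x y h, P = .some x y h ∧ ∃ a : Fin 3 → Kˣ, ∀ i, (a i : K) = x - e i := by
  rcases P with _ | ⟨x, y, h⟩
  · exact absurd rfl hP
  · have hx (i : Fin 3) : x - e i ≠ 0 := fun hi ↦
      hP ((he.neg_some_eq_self_iff h).mpr ⟨i, sub_eq_zero.mp hi⟩)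
    exact ⟨x, y, h, rfl, fun i ↦ Units.mk0 _ (hx i), fun _ ↦ rfl⟩

theorem HasTwoTorsionRoots.sub_mem_range_of_twoDescentMap_eq [DecidableEq K] [W.IsElliptic]
    (he : HasTwoTorsionRoots W e) {P Q : W.toAffine.Point} (hP : -P ≠ P) (hQ : -Q ≠ Q)
    (hPQ : twoDescentMap W e P = twoDescentMap W e Q) :
    P - Q ∈ (nsmulAddMonoidHom (α := W.toAffine.Point) 2).range := by
  obtain ⟨x₁, y₁, h₁, rfl, a, ha⟩ := he.exists_units_of_neg_ne hP
  obtain ⟨x₂, y₂, h₂, rfl, b, hb⟩ := he.exists_units_of_neg_ne hQ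
  rw [twoDescentMap_some h₁ ha, twoDescentMap_some h₂ hb] at hPQ
  refine he.sub_mem_range_two_nsmul h₁ h₂ (fun i ↦ ?_) fun i ↦ ?_
  · rw [← ha, ← hb]
    exact mul_ne_zero (a i).ne_zero (b i).ne_zero
  · obtain ⟨c, hc⟩ := QuotientGroup.eq.mp (congrFun hPQ i)
    have hab : a i * b i = (a i * c) * (a i * c) := by
      rw [mul_mul_mul_comm, ← sq c, show c ^ 2 = (a i)⁻¹ * b i from hc, mul_assoc,
        mul_inv_cancel_left]
    refine ⟨(a i * c : Kˣ), ?_⟩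
    rw [← ha, ← hb, ← Units.val_mul, hab, Units.val_mul]

variable {R : Type*} [CommRing R] [IsDedekindDomain R] [Algebra R K] [IsFractionRing R K]

variable (R) in
/-- The primes at which some difference `e i - e j` is not a unit. The `2`-descent map is unramified
outside of them. -/
def collisionPrimes (e : Fin 3 → K) : Set (HeightOneSpectrum R) :=
  {v | ∃ i j, i ≠ j ∧ v.valuation K (e i - e j) ≠ 1}

theorem finite_collisionPrimes (he : e.Injective) : (collisionPrimes R e).Finite := by
  simp only [collisionPrimes, Set.ofPred_exists, Set.ofPred_and]
  refine Set.finite_iUnion fun i ↦ Set.finite_iUnion fun j ↦ ?_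
  by_cases hij : i = j
  · simp [hij]
  · exact (finite_setOf_valuation_ne_one R (sub_ne_zero.mpr (he.ne hij))).inter_of_right _

theorem HasTwoTorsionRoots.twoDescentMap_mem_selmerGroup [DecidableEq K] [W.IsElliptic]
    (he : HasTwoTorsionRoots W e) {P : W.toAffine.Point} (hP : -P ≠ P) (i : Fin 3) :
    twoDescentMap W e P i ∈ selmerGroup (S := collisionPrimes R e) (n := 2) := by
  obtain ⟨x, y, h, rfl, a, ha⟩ := he.exists_units_of_neg_ne hP
  have hprod : ((∏ j, a j : Kˣ) : K) = ((2 * y + W.a₁ * x + W.a₃) / 2) ^ 2 := by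
    have h4 : (2 : K) ^ 2 = 4 := by norm_num
    have h4_ne : (4 : K) ≠ 0 := h4 ▸ pow_ne_zero 2 he.two_ne_zero
    rw [div_pow, he.equation_iff_sq_eq.mp h.1, h4, mul_div_cancel_left₀ _ h4_ne, Units.coe_prod,
      Fin.prod_univ_three, ha, ha, ha]
  have hy : (2 * y + W.a₁ * x + W.a₃) / 2 ≠ 0 :=
    ne_zero_pow two_ne_zero (hprod ▸ (∏ j, a j).ne_zero)
  rw [twoDescentMap_some h ha]
  refine mk_mem_selmerGroup_of_prod_eq_pow (y := Units.mk0 _ hy) (by decide) (Units.ext hprod)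
    (fun v hv j k hjk ↦ ?_) i
  rw [ha, ha, sub_sub_sub_cancel_left]
  by_contra hne
  exact hv ⟨k, j, hjk.symm, hne⟩

variable (R) in
theorem HasTwoTorsionRoots.finiteIndex_range_two_nsmul [Finite (ClassGroup R)] [Group.FG Rˣ]
    [DecidableEq K] [W.IsElliptic] (he : HasTwoTorsionRoots W e) :
    (nsmulAddMonoidHom (α := W.toAffine.Point) 2).range.FiniteIndex := by
  set H := (nsmulAddMonoidHom (α := W.toAffine.Point) 2).range
  set Sel := selmerGroup (S := collisionPrimes R e) (K := K) (n := 2)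
  have hSel : Finite Sel := finite_selmerGroup (finite_collisionPrimes he.injective) two_ne_zero
  have hpi : {a : Fin 3 → Kˣ ⧸ (powMonoidHom 2 : Kˣ →* Kˣ).range | ∀ i, a i ∈ Sel}.Finite :=
    Set.Finite.pi' fun _ ↦ Set.toFinite (Sel : Set (Kˣ ⧸ (powMonoidHom 2 : Kˣ →* Kˣ).range))
  have : Finite (W.toAffine.Point ⧸ H) :=
    finite_of_surjective_of_separates QuotientAddGroup.mk_surjective he.finite_setOf_neg_eq_self
      hpi (fun P hP i ↦ he.twoDescentMap_mem_selmerGroup hP i) fun P hP Q hQ hPQ ↦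
        QuotientAddGroup.eq_iff_sub_mem.mpr (he.sub_mem_range_of_twoDescentMap_eq hP hQ hPQ)
  exact AddSubgroup.finiteIndex_of_finite_quotient

end TwoDescent

/-! ### The sum and difference of two points on `x`-coordinates -/

section AddSub

open Affine.Point

variable {K : Type*} [Field K] (W : WeierstrassCurve K)

theorem eval_addSubMap (s t u : K) :
    (fun i ↦ (addSubMap W i).eval ![s, t, u]) =
      ![s ^ 2 - W.b₄ * s * u - W.b₆ * t * u - W.b₈ * u ^ 2,
        2 * t * s + W.b₂ * s * u + W.b₄ * t * u + W.b₆ * u ^ 2, t ^ 2 - 4 * s * u] := by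
  ext i
  fin_cases i <;> simp [addSubMap]

variable [DecidableEq K]

theorem sq_mul_addX_slope {x₁ x₂ : K} (hx : x₁ ≠ x₂) (y₁ y₂ : K) :
    (x₁ - x₂) ^ 2 * W.toAffine.addX x₁ x₂ (W.toAffine.slope x₁ x₂ y₁ y₂) =
      (y₁ - y₂) ^ 2 + W.a₁ * (y₁ - y₂) * (x₁ - x₂) - (x₁ - x₂) ^ 2 * (W.a₂ + x₁ + x₂) := by
  have hD : x₁ - x₂ ≠ 0 := sub_ne_zero.mpr hx
  rw [Affine.slope_of_X_ne hx, Affine.addX]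
  field_simp
  ring

variable {W}

theorem sq_mul_addX_add_addX_negY {x₁ x₂ y₁ y₂ : K} (h₁ : W.toAffine.Equation x₁ y₁)
    (h₂ : W.toAffine.Equation x₂ y₂) (hx : x₁ ≠ x₂) :
    (x₁ - x₂) ^ 2 * (W.toAffine.addX x₁ x₂ (W.toAffine.slope x₁ x₂ y₁ y₂) +
        W.toAffine.addX x₁ x₂ (W.toAffine.slope x₁ x₂ y₁ (W.toAffine.negY x₂ y₂))) =
      2 * (x₁ + x₂) * (x₁ * x₂) + W.b₂ * (x₁ * x₂) + W.b₄ * (x₁ + x₂) + W.b₆ := by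
  rw [Affine.equation_iff] at h₁ h₂
  rw [mul_add, sq_mul_addX_slope W hx, sq_mul_addX_slope W hx, Affine.negY, b₂, b₄, b₆]
  linear_combination 2 * h₁ + 2 * h₂

theorem sq_mul_addX_mul_addX_negY {x₁ x₂ y₁ y₂ : K} (h₁ : W.toAffine.Equation x₁ y₁)
    (h₂ : W.toAffine.Equation x₂ y₂) (hx : x₁ ≠ x₂) :
    (x₁ - x₂) ^ 2 * (W.toAffine.addX x₁ x₂ (W.toAffine.slope x₁ x₂ y₁ y₂) *
        W.toAffine.addX x₁ x₂ (W.toAffine.slope x₁ x₂ y₁ (W.toAffine.negY x₂ y₂))) =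
      (x₁ * x₂) ^ 2 - W.b₄ * (x₁ * x₂) - W.b₆ * (x₁ + x₂) - W.b₈ := by
  rw [Affine.equation_iff] at h₁ h₂
  refine mul_left_cancel₀ (pow_ne_zero 2 (sub_ne_zero.mpr hx)) ?_
  rw [← mul_assoc, mul_mul_mul_comm, sq_mul_addX_slope W hx, sq_mul_addX_slope W hx, Affine.negY,
    b₄, b₆, b₈]
  -- `g` is the difference of the defects of `h₁` and `h₂`. The two sides of the goal differ by
  -- a quadratic polynomial in these defects, whose quadratic part is `g ^ 2`.
  set g := y₁ ^ 2 + W.a₁ * x₁ * y₁ + W.a₃ * y₁ - (x₁ ^ 3 + W.a₂ * x₁ ^ 2 + W.a₄ * x₁ + W.a₆) -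
    (y₂ ^ 2 + W.a₁ * x₂ * y₂ + W.a₃ * y₂ - (x₂ ^ 3 + W.a₂ * x₂ ^ 2 + W.a₄ * x₂ + W.a₆))
  linear_combination
    ((x₁ - x₂) * (2 * x₁ * x₂ + 4 * x₂ ^ 2 + (W.a₁ ^ 2 + 4 * W.a₂) * x₂ +
      (2 * W.a₄ + W.a₁ * W.a₃)) + g) * h₁ -
    ((x₁ - x₂) * (2 * x₁ * x₂ + 4 * x₁ ^ 2 + (W.a₁ ^ 2 + 4 * W.a₂) * x₁ +
      (2 * W.a₄ + W.a₁ * W.a₃)) + g) * h₂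

theorem eval_addSubMap_some_some_of_ne {x₁ x₂ y₁ y₂ : K} (h₁ : W.toAffine.Nonsingular x₁ y₁)
    (h₂ : W.toAffine.Nonsingular x₂ y₂) (hx : x₁ ≠ x₂) :
    (fun i ↦ (addSubMap W i).eval ((some _ _ h₁).sym2x (some _ _ h₂))) =
      (x₁ - x₂) ^ 2 • (some _ _ h₁ + some _ _ h₂).sym2x (some _ _ h₁ - some _ _ h₂) := by
  rw [sub_eq_add_neg (some _ _ h₁), neg_some, add_of_X_ne hx, add_of_X_ne hx, sym2x_some_some,
    sym2x_some_some, eval_addSubMap, Matrix.smul_vec3, smul_eq_mul, smul_eq_mul, smul_eq_mul,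
    sq_mul_addX_mul_addX_negY h₁.1 h₂.1 hx, sq_mul_addX_add_addX_negY h₁.1 h₂.1 hx]
  congr 1
  · ring
  · congr 1
    · ring
    · congr 1
      ring

theorem eval_addSubMap_some_self_of_ne {x y : K} (h : W.toAffine.Nonsingular x y)
    (hy : y ≠ W.toAffine.negY x y) :
    (fun i ↦ (addSubMap W i).eval ((some _ _ h).sym2x (some _ _ h))) =
      (y - W.toAffine.negY x y) ^ 2 • (some _ _ h + some _ _ h).sym2x 0 := by
  have h_eq := (Affine.equation_iff ..).mp h.1
  have hη := sub_ne_zero.mpr hy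
  have hX : (y - W.toAffine.negY x y) ^ 2 * W.toAffine.addX x x (W.toAffine.slope x x y y) =
      (x * x) ^ 2 - W.b₄ * (x * x) - W.b₆ * (x + x) - W.b₈ := by
    rw [Affine.slope_of_Y_ne rfl hy, Affine.addX, b₄, b₆, b₈]
    field_simp
    rw [Affine.negY]
    linear_combination -(W.a₁ ^ 2 + 4 * W.a₂ + 8 * x) * h_eq
  have hη_sq : (y - W.toAffine.negY x y) ^ 2 =
      2 * (x + x) * (x * x) + W.b₂ * (x * x) + W.b₄ * (x + x) + W.b₆ := by
    rw [Affine.negY, b₂, b₄, b₆]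
    linear_combination 4 * h_eq
  rw [add_self_of_Y_ne hy, sym2x_some_some, sym2x_some_zero, eval_addSubMap, Matrix.smul_vec3,
    smul_eq_mul, smul_eq_mul, smul_eq_mul, hX, hη_sq]
  congr 1
  · ring
  · congr 1
    · ring
    · congr 1
      ring

theorem eval_addSubMap_some_self_of_eq {x y : K} (h : W.toAffine.Nonsingular x y)
    (hy : y = W.toAffine.negY x y) :
    (fun i ↦ (addSubMap W i).eval ((some _ _ h).sym2x (some _ _ h))) =
      ((x * x) ^ 2 - W.b₄ * (x * x) - W.b₆ * (x + x) - W.b₈) •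
        (some _ _ h + some _ _ h).sym2x 0 := by
  have h_eq := (Affine.equation_iff ..).mp h.1
  have h_root : 2 * (x + x) * (x * x) + W.b₂ * (x * x) + W.b₄ * (x + x) + W.b₆ = 0 := by
    rw [Affine.negY] at hy
    rw [b₂, b₄, b₆]
    linear_combination -4 * h_eq + (2 * y + W.a₁ * x + W.a₃) * hy
  rw [add_self_of_Y_eq hy, sym2x_some_some, sym2x_zero_zero, eval_addSubMap, Matrix.smul_vec3]
  simp only [mul_one, one_pow, smul_eq_mul, mul_zero, h_root]
  congr 3
  ring

theorem exists_eval_addSubMap_self_eq_smul [W.IsElliptic] (P : W.toAffine.Point) :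
    ∃ c : K, c ≠ 0 ∧ (fun i ↦ (addSubMap W i).eval (P.sym2x P)) = c • (P + P).sym2x 0 := by
  suffices h : ∃ c : K, (fun i ↦ (addSubMap W i).eval (P.sym2x P)) = c • (P + P).sym2x 0 by
    obtain ⟨c, hc⟩ := h
    refine ⟨c, ?_, hc⟩
    rintro rfl
    exact addSubMap_ne_zero W (sym2x_ne_zero P P) (hc.trans (zero_smul K _))
  rcases P with _ | ⟨x, y, h⟩
  · rw [← zero_def, add_zero, sym2x_zero_zero, eval_addSubMap]
    exact ⟨1, by simp⟩
  · by_cases hy : y = W.toAffine.negY x y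
    · exact ⟨_, eval_addSubMap_some_self_of_eq h hy⟩
    · exact ⟨_, eval_addSubMap_some_self_of_ne h hy⟩

theorem exists_eval_addSubMap_eq_smul [W.IsElliptic] (P Q : W.toAffine.Point) :
    ∃ c : K, c ≠ 0 ∧
      (fun i ↦ (addSubMap W i).eval (P.sym2x Q)) = c • (P + Q).sym2x (P - Q) := by
  by_cases hPQ : P.xRep = Q.xRep
  · rcases eq_or_eq_neg_of_xRep_eq_xRep hPQ with rfl | rfl
    · rw [sub_self]
      exact exists_eval_addSubMap_self_eq_smul P
    · rw [sym2x_neg_left, neg_add_cancel, sym2x_comm 0, ← sym2x_neg_left (-Q - Q), neg_sub,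
        sub_neg_eq_add]
      exact exists_eval_addSubMap_self_eq_smul Q
  · rcases P with _ | ⟨x₁, y₁, h₁⟩ <;> rcases Q with _ | ⟨x₂, y₂, h₂⟩
    · exact absurd rfl hPQ
    · rw [← zero_def, zero_add, zero_sub, sym2x_neg_right, sym2x_zero_some, sym2x_some_some,
        eval_addSubMap]
      exact ⟨1, one_ne_zero, by simp [sq, two_mul]⟩
    · rw [← zero_def, add_zero, sub_zero, sym2x_some_zero, sym2x_some_some, eval_addSubMap]
      exact ⟨1, one_ne_zero, by simp [sq, two_mul]⟩
    · have hx : x₁ ≠ x₂ := by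
        rintro rfl
        exact hPQ rfl
      exact ⟨_, pow_ne_zero 2 (sub_ne_zero.mpr hx), eval_addSubMap_some_some_of_ne h₁ h₂ hx⟩

end AddSub

/-! ### Heights -/

section Height

open Height

variable {K : Type*} [Field K] [AdmissibleAbsValues K] (W : WeierstrassCurve K)

theorem abs_logHeight_sym2x_sub_le : ∃ C, ∀ P Q : W.toAffine.Point,
    |logHeight (P.sym2x Q) - (logHeight P.xRep + logHeight Q.xRep)| ≤ C := by
  obtain ⟨C, hC⟩ := abs_logHeight_sym2_sub_le K
  refine ⟨C, fun P Q ↦ ?_⟩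
  have hvec (v : Fin 2 → K) : ![v 0, v 1] = v := by
    ext i
    fin_cases i <;> rfl
  have := hC (a := P.xRep 0) (b := P.xRep 1) (c := Q.xRep 0) (d := Q.xRep 1)
    (hvec P.xRep ▸ P.xRep_ne_zero) (hvec Q.xRep ▸ Q.xRep_ne_zero)
  rwa [hvec, hvec] at this

theorem abs_logHeight_xRep_parallelogram_le [DecidableEq K] [W.IsElliptic] :
    ∃ C, ∀ P Q : W.toAffine.Point,
      |logHeight (P + Q).xRep + logHeight (P - Q).xRep -
        2 * (logHeight P.xRep + logHeight Q.xRep)| ≤ C := by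
  obtain ⟨C₁, hC₁⟩ := abs_logHeight_addSubMap_sub_two_mul_logHeight_le W
  obtain ⟨C₂, hC₂⟩ := abs_logHeight_sym2x_sub_le W
  refine ⟨C₁ + 3 * C₂, fun P Q ↦ ?_⟩
  obtain ⟨c, hc, h⟩ := exists_eval_addSubMap_eq_smul P Q
  have h_addSub := hC₁ (P.sym2x Q)
  rw [h, logHeight_smul_eq_logHeight _ hc] at h_addSub
  have h_sym := hC₂ P Q
  have h_sym_addSub := hC₂ (P + Q) (P - Q)
  rw [abs_le] at *
  constructor <;> linarith

theorem northcott_logHeight_xRep [Northcott (logHeight₁ (K := K))] :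
    Northcott fun P : W.toAffine.Point ↦ logHeight P.xRep where
  finite_le B := by
    have hT : (insert ![1, 0] ((fun x : K ↦ ![x, 1]) '' {x | logHeight₁ x ≤ B})).Finite :=
      ((Northcott.finite_le B).image _).insert _
    refine (finite_setOf_xRep_mem W.toAffine hT).subset fun P hP ↦ ?_
    rcases P with _ | ⟨x, y, h⟩
    · exact Set.mem_insert _ _
    · refine Set.mem_insert_of_mem _ ⟨x, ?_, rfl⟩
      rw [Set.mem_ofPred_eq, logHeight₁_eq_logHeight]
      exact hP

end Height

open NumberField in
theorem HasTwoTorsionRoots.fg_point {K : Type*} [Field K] [NumberField K] [DecidableEq K]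
    {W : WeierstrassCurve K} [W.IsElliptic] {e : Fin 3 → K} (he : HasTwoTorsionRoots W e) :
    AddGroup.FG W.toAffine.Point := by
  have : Group.FG (𝓞 K)ˣ := Group.fg_iff_monoid_fg.mpr inferInstance
  have := northcott_logHeight_xRep W
  obtain ⟨C, hC⟩ := abs_logHeight_xRep_parallelogram_le W
  exact AddCommGroup.fg_of_descent' (he.finiteIndex_range_two_nsmul (𝓞 K))
    (fun P ↦ Height.logHeight_nonneg P.xRep) hC

theorem exists_hasTwoTorsionRoots_map {F L : Type*} [Field F] [Field L] (W : WeierstrassCurve F)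
    (h2 : (2 : F) ≠ 0) (φ : F →+* L) (h : (W.twoTorsionPolynomial.toPoly.map φ).Splits) :
    ∃ e, HasTwoTorsionRoots (W.map φ) e := by
  have ha : W.twoTorsionPolynomial.a ≠ 0 := by
    rw [twoTorsionPolynomial, show (4 : F) = 2 * 2 by norm_num]
    exact mul_ne_zero h2 h2
  obtain ⟨x, y, z, hroots⟩ := (Cubic.splits_iff_roots_eq_three ha).mp h
  have hb := Cubic.b_eq_three_roots ha hroots
  have hc := Cubic.c_eq_three_roots ha hroots
  have hd := Cubic.d_eq_three_roots ha hroots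
  simp only [twoTorsionPolynomial, map_ofNat, map_mul] at hb hc hd
  refine ⟨![x, y, z], ?_, mul_left_cancel₀ ((map_ne_zero φ).mpr h2) ?_, ?_⟩
  · simp only [map_b₂, Matrix.cons_val]
    linear_combination hb
  · simp only [map_b₄, map_ofNat, Matrix.cons_val]
    linear_combination hc
  · simp only [map_b₆, Matrix.cons_val]
    linear_combination hd

theorem fg_point_of_fg_point_baseChange {F : Type*} (L : Type*) [Field F] [Field L] [Algebra F L]
    [DecidableEq F] [DecidableEq L] (W : WeierstrassCurve F)
    (h : AddGroup.FG (W.map (algebraMap F L)).toAffine.Point) :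
    AddGroup.FG W.toAffine.Point := by
  have : Module.Finite ℤ (W.map (algebraMap F L)).toAffine.Point :=
    Module.Finite.iff_addGroup_fg.mpr h
  let f : (W.map (algebraMap F F)).toAffine.Point →+ (W.map (algebraMap F L)).toAffine.Point :=
    Affine.Point.baseChange (W' := W) F L
  have hf : Function.Injective f := Affine.Point.map_injective (W' := W) (Algebra.ofId F L)
  have := Module.Finite.iff_addGroup_fg.mp (Module.Finite.of_injective f.toIntLinearMap hf)
  rwa [Algebra.algebraMap_self, W.map_id] at this

end MordellWeil

theorem mordell_weil_general {K : Type*} [Field K] [NumberField K] [DecidableEq K]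
    (W : WeierstrassCurve K) [W.IsElliptic] : AddGroup.FG W.toAffine.Point := by
  classical
  let L := W.twoTorsionPolynomial.toPoly.SplittingField
  have : CharZero L := charZero_of_injective_algebraMap (algebraMap K L).injective
  have : FiniteDimensional ℚ L := Module.Finite.trans K L
  have : NumberField L := {}
  obtain ⟨e, he⟩ := MordellWeil.exists_hasTwoTorsionRoots_map W two_ne_zero (algebraMap K L)
    (Polynomial.SplittingField.splits _)
  exact MordellWeil.fg_point_of_fg_point_baseChange L W he.fg_point

/-- **Mordell's theorem**: for an elliptic curve `E` defined over `ℚ` (a Weierstrass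
curve with nonzero, i.e. invertible, discriminant), the group `E(ℚ)` of rational
points is a finitely generated abelian group. -/
theorem mordell_weil (E : WeierstrassCurve ℚ) [E.IsElliptic] :
    AddGroup.FG E.toAffine.Point :=
  mordell_weil_general E
end

section
/- Let E be an elliptic curve defined over the finite field 𝔽_q with q elements, let N_q = #E(𝔽_q) be the number of 𝔽_q-rational points of E, and set a = q + 1 − N_q. Then a² ≤ 4q. -/
/-!
Let `P = (X, Y)` be the generic point of `E` and `Q = (X ^ q, Y ^ q)` its Frobenius image, both over
the function field of `E`. The `x`-coordinate of `Q + nP` lies in `F(X)`; let `d n` be its degree as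
a rational function. The map `(x(A), x(B)) ↦ (x(A + B), x(A - B))` is given on `Sym² ℙ¹ = ℙ²` by
quadratic forms without common zero, so degrees satisfy the parallelogram law, which makes `d n` a
monic quadratic polynomial in `n` with `d 0 = q`. It is nonnegative on `ℤ` and, again by the
parallelogram law, has no two consecutive zeros, so its discriminant is not positive. It remains to
see that `d 1 = 2q + 2 - #E(𝔽_q)`.

The `x`-coordinate of `Q ± P` is a fraction with denominator `(X ^ q - X) ^ 2` and a numerator of
degree at most `2q + 1` which, modulo the denominator, is minus the norm of `Y ^ q - y(±P)`. At
`a ∈ 𝔽_q` this norm is divisible by `X - a` to the number of rational points above `a` for the sign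
`+`, and to two minus that number for the sign `-`. Cancelling these factors bounds `d 1` and
`d (-1)` from above, and since `d 1 + d (-1) = 2q + 2` both bounds are equalities.
-/

open Polynomial WeierstrassCurve Affine CoordinateRing
open scoped Polynomial.Bivariate

universe u

/-! ### Quadratic sequences -/

section QuadraticSequence

lemma eq_quadratic_of_second_difference {d : ℤ → ℤ}
    (hd : ∀ n, d (n + 1) + d (n - 1) = 2 * d n + 2) (n : ℤ) :
    d n = n ^ 2 + (d 1 - 1 - d 0) * n + d 0 := by
  suffices d n = n ^ 2 + (d 1 - 1 - d 0) * n + d 0 ∧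
      d (n + 1) = (n + 1) ^ 2 + (d 1 - 1 - d 0) * (n + 1) + d 0 from this.1
  induction n with
  | zero => exact ⟨by ring, by ring_nf⟩
  | succ n ih =>
    have h := hd (n + 1)
    rw [add_sub_cancel_right] at h
    exact ⟨ih.2, by linear_combination h + 2 * ih.2 - ih.1⟩
  | pred n ih =>
    have h := hd (-n)
    rw [sub_add_cancel]
    exact ⟨by linear_combination h + 2 * ih.1 - ih.2, ih.1⟩

/-- With `d n = n ^ 2 + b * n + d 0`, the bound follows from the value at `-b / 2` if `b` is even,
and from the equal values at the two integers next to `-b / 2` if `b` is odd. -/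
lemma sq_le_four_mul_of_second_difference {d : ℤ → ℤ}
    (hd : ∀ n, d (n + 1) + d (n - 1) = 2 * d n + 2) (hnonneg : ∀ n, 0 ≤ d n)
    (hzero : ∀ n, d n = 0 → d (n + 1) ≠ 0) :
    (d 1 - 1 - d 0) ^ 2 ≤ 4 * d 0 := by
  have hquad := eq_quadratic_of_second_difference hd
  set b := d 1 - 1 - d 0
  obtain ⟨k, hk⟩ | ⟨k, hk⟩ := b.even_or_odd
  · have h := hnonneg (-k)
    rw [hquad, hk] at h
    rw [hk]
    linarith
  · have hsymm : d (-k - 1 + 1) = d (-k - 1) := by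
      rw [hquad (-k - 1 + 1), hquad (-k - 1), hk]
      ring
    have hpos : 0 < d (-k - 1) := (hnonneg _).lt_of_ne' fun h ↦ hzero _ h (hsymm.trans h)
    rw [hquad, hk] at hpos
    rw [hk]
    linarith

end QuadraticSequence

/-! ### Primitive vectors and homogeneous polynomials -/

section SpanEqTop

variable {R ι : Type*} [CommRing R] {v : ι → R}

lemma dvd_of_forall_dvd_mul_of_span_eq_top (hv : Ideal.span (Set.range v) = ⊤) {g h : R}
    (hdvd : ∀ i, h ∣ g * v i) : h ∣ g := by
  have hone : (1 : R) ∈ Ideal.span (Set.range v) := hv ▸ Submodule.mem_top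
  suffices ∀ r ∈ Ideal.span (Set.range v), h ∣ g * r by simpa only [mul_one] using this 1 hone
  intro r hr
  induction hr using Submodule.span_induction with
  | mem r hr => obtain ⟨i, rfl⟩ := hr; exact hdvd i
  | zero => simp only [mul_zero, dvd_zero]
  | add r s _ _ hr hs => exact mul_add g r s ▸ dvd_add hr hs
  | smul a r _ hr => exact smul_eq_mul a r ▸ mul_left_comm a g r ▸ hr.mul_left a

lemma span_range_eq_top_iff_forall_isMaximal :
    Ideal.span (Set.range v) = ⊤ ↔
      ∀ M : Ideal R, M.IsMaximal → Ideal.Quotient.mk M ∘ v ≠ 0 := by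
  have hmem (M : Ideal R) : Ideal.Quotient.mk M ∘ v = 0 ↔ Ideal.span (Set.range v) ≤ M := by
    simp only [Ideal.span_le, Set.range_subset_iff, SetLike.mem_coe, funext_iff,
      Function.comp_apply, Pi.zero_apply, Ideal.Quotient.eq_zero_iff_mem]
  simp only [ne_eq, hmem]
  refine ⟨fun h M hM hle ↦ hM.ne_top (top_le_iff.mp (h ▸ hle)), fun h ↦ ?_⟩
  by_contra htop
  obtain ⟨M, hM, hle⟩ := Ideal.exists_le_maximal _ htop
  exact h M hM hle

lemma exists_eq_smul_span_eq_top [IsDomain R] [IsPrincipalIdealRing R] (hv : v ≠ 0) :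
    ∃ (g : R) (w : ι → R), g ≠ 0 ∧ v = g • w ∧ Ideal.span (Set.range w) = ⊤ := by
  obtain ⟨g, hg⟩ := IsPrincipalIdealRing.principal (Ideal.span (Set.range v))
  rw [Ideal.submodule_span_eq] at hg
  have hgv (i : ι) : g ∣ v i :=
    Ideal.mem_span_singleton.mp <| hg ▸ Ideal.subset_span (Set.mem_range_self i)
  choose w hw using hgv
  have hg0 : g ≠ 0 := by
    rintro rfl
    exact hv <| funext fun i ↦ (hw i).trans (zero_mul _)
  have hvw : Ideal.span (Set.range v) = Ideal.span {g} * Ideal.span (Set.range w) := by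
    rw [Ideal.span_mul_span', Set.singleton_mul, ← Set.range_comp]
    exact congr(Ideal.span (Set.range $(funext hw)))
  exact ⟨g, w, hg0, funext hw, (Ideal.span_singleton_mul_right_inj hg0).mp <| by
    rw [← hvw, hg, Ideal.mul_top]⟩

end SpanEqTop

section SymSq

variable {R S : Type*} [CommRing R] [CommRing S]

/-- The coefficient vector of the product of the linear forms with coefficient vectors `v` and `w`.
On projective points it is the quotient map `ℙ¹ × ℙ¹ → Sym² ℙ¹ ≅ ℙ²`. -/
def symSq (v w : Fin 2 → R) : Fin 3 → R :=
  ![v 0 * w 0, v 0 * w 1 + v 1 * w 0, v 1 * w 1]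

lemma map_symSq (f : R →+* S) (v w : Fin 2 → R) : f ∘ symSq v w = symSq (f ∘ v) (f ∘ w) := by
  ext i
  fin_cases i <;> simp [symSq]

lemma symSq_smul_smul (a b : R) (v w : Fin 2 → R) :
    symSq (a • v) (b • w) = (a * b) • symSq v w := by
  simp only [symSq, Matrix.smul_vec3, Pi.smul_apply, smul_eq_mul]
  exact Matrix.vec3_eq (by ring) (by ring) (by ring)

lemma symSq_ne_zero [IsDomain R] {v w : Fin 2 → R} (hv : v ≠ 0) (hw : w ≠ 0) :
    symSq v w ≠ 0 := by
  contrapose! hv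
  have h0 : v 0 * w 0 = 0 := congrFun hv 0
  have h1 : v 0 * w 1 + v 1 * w 0 = 0 := congrFun hv 1
  have h2 : v 1 * w 1 = 0 := congrFun hv 2
  have hw' : w 0 ≠ 0 ∨ w 1 ≠ 0 := by simpa [funext_iff, Fin.forall_fin_two, imp_iff_not_or] using hw
  ext j
  change v j = 0
  rcases hw' with hw0 | hw1
  · have hv0 : v 0 = 0 := (mul_eq_zero.mp h0).resolve_right hw0
    rw [hv0, zero_mul, zero_add] at h1
    fin_cases j
    exacts [hv0, (mul_eq_zero.mp h1).resolve_right hw0]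
  · have hv1 : v 1 = 0 := (mul_eq_zero.mp h2).resolve_right hw1
    rw [hv1, zero_mul, add_zero] at h1
    fin_cases j
    exacts [(mul_eq_zero.mp h1).resolve_right hw1, hv1]

end SymSq

section Homogeneous

variable {R A σ : Type*} [CommRing R] [CommRing A] [Algebra R A] {φ : MvPolynomial σ R} {d : ℕ}

lemma aeval_smul_of_isHomogeneous (hφ : φ.IsHomogeneous d) (c : A) (x : σ → A) :
    MvPolynomial.aeval (c • x) φ = c ^ d * MvPolynomial.aeval x φ := by
  simp only [MvPolynomial.aeval_def, MvPolynomial.eval₂_eq, Finset.mul_sum]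
  refine Finset.sum_congr rfl fun s hs ↦ ?_
  simp only [Pi.smul_apply, smul_eq_mul, mul_pow, Finset.prod_mul_distrib,
    Finset.prod_pow_eq_pow_sum, ← hφ.degree_eq_sum_deg_support hs]
  ring

lemma prod_pow_eq_multiset_prod (s : σ →₀ ℕ) (x : σ → A) :
    ∏ i ∈ s.support, x i ^ s i = (s.toMultiset.map x).prod := by
  rw [Finsupp.toMultiset_map, Finsupp.prod_toMultiset, Finsupp.prod_mapDomain_index] <;>
    simp [Finsupp.prod, pow_add]

lemma natDegree_aeval_le_of_isHomogeneous (hφ : φ.IsHomogeneous d) {v : σ → A[X]} {n : ℕ}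
    (hv : ∀ i, (v i).natDegree ≤ n) : (MvPolynomial.aeval v φ).natDegree ≤ d * n := by
  rw [MvPolynomial.aeval_def, MvPolynomial.eval₂_eq]
  refine natDegree_sum_le_of_forall_le _ _ fun s hs ↦ ?_
  rw [hφ.degree_eq_sum_deg_support hs, Finset.sum_mul, Polynomial.algebraMap_apply]
  exact (natDegree_C_mul_le _ _).trans <| (natDegree_prod_le _ _).trans <|
    Finset.sum_le_sum fun i _ ↦ natDegree_pow_le_of_le _ (hv i)

lemma coeff_aeval_of_isHomogeneous (hφ : φ.IsHomogeneous d) {v : σ → A[X]} {n : ℕ}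
    (hv : ∀ i, (v i).natDegree ≤ n) :
    (MvPolynomial.aeval v φ).coeff (d * n) = MvPolynomial.aeval (fun i ↦ (v i).coeff n) φ := by
  simp only [MvPolynomial.aeval_def, MvPolynomial.eval₂_eq, finsetSum_coeff,
    Polynomial.algebraMap_apply, coeff_C_mul, prod_pow_eq_multiset_prod]
  refine Finset.sum_congr rfl fun s hs ↦ ?_
  have hcard : d = (s.toMultiset.map v).card := by
    rw [hφ.degree_eq_sum_deg_support hs, Multiset.card_map, Finsupp.card_toMultiset]
    rfl
  rw [hcard, coeff_multiset_prod_of_natDegree_le _ n, Multiset.map_map]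
  · rfl
  · intro p hp
    obtain ⟨i, -, rfl⟩ := Multiset.mem_map.mp hp
    exact hv i

end Homogeneous

/-! ### Heights over `F(X)` -/

section Heights

variable {F : Type u} [Field F] {ι κ : Type*}

/-- A vector of polynomials without common factor whose maximal degree is `n`. Equivalently, its
reductions at all places of `F(X)` are nonzero, where the reduction at infinity is the vector of
coefficients of `X ^ n`. -/
structure IsPrimitiveOfDegree (v : ι → F[X]) (n : ℕ) : Prop where
  span_eq_top : Ideal.span (Set.range v) = ⊤
  natDegree_le : ∀ i, (v i).natDegree ≤ n
  coeff_ne_zero : (fun i ↦ (v i).coeff n) ≠ 0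

namespace IsPrimitiveOfDegree

lemma exists_coeff_ne_zero {v : ι → F[X]} {n : ℕ} (hv : IsPrimitiveOfDegree v n) :
    ∃ i, v i ≠ 0 ∧ (v i).coeff n ≠ 0 := by
  obtain ⟨i, hi⟩ := Function.ne_iff.mp hv.coeff_ne_zero
  exact ⟨i, fun h0 ↦ hi <| by rw [h0, coeff_zero, Pi.zero_apply], hi⟩

lemma of_span_eq_top [Finite ι] {v : ι → F[X]} (hv : Ideal.span (Set.range v) = ⊤) :
    ∃ n, IsPrimitiveOfDegree v n := by
  obtain ⟨i, hi⟩ : ∃ i, v i ≠ 0 := by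
    by_contra! h
    rw [Ideal.span_eq_bot.mpr (Set.forall_mem_range.mpr h)] at hv
    exact bot_ne_top hv
  have : Nonempty ι := ⟨i⟩
  obtain ⟨j, hj⟩ := Finite.exists_max fun i ↦ (v i).degree
  have hvj : v j ≠ 0 := fun h0 ↦ hi <| degree_eq_bot.mp <| le_bot_iff.mp <| by
    simpa only [h0, degree_zero] using hj i
  exact ⟨(v j).natDegree, hv, fun i ↦ natDegree_le_natDegree (hj i), fun h ↦
    hvj (leadingCoeff_eq_zero.mp (congrFun h j))⟩

lemma le_of_smul_eq_smul {v w : ι → F[X]} {n m : ℕ} (hv : IsPrimitiveOfDegree v n)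
    (hw : IsPrimitiveOfDegree w m) {a b : F[X]} (ha : a ≠ 0) (hb : b ≠ 0)
    (h : a • v = b • w) : n ≤ m := by
  obtain ⟨t, rfl⟩ : b ∣ a :=
    dvd_of_forall_dvd_mul_of_span_eq_top hv.span_eq_top fun i ↦ ⟨w i, congrFun h i⟩
  obtain ⟨i, hvi, hi⟩ := hv.exists_coeff_ne_zero
  have hw_eq : t * v i = w i := mul_left_cancel₀ hb <| (mul_assoc ..).symm.trans (congrFun h i)
  calc n ≤ (v i).natDegree := le_natDegree_of_ne_zero hi
    _ ≤ (t * v i).natDegree := natDegree_le_of_dvd (dvd_mul_left ..)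
        (mul_ne_zero (right_ne_zero_of_mul ha) hvi)
    _ ≤ m := hw_eq ▸ hw.natDegree_le i

lemma symSq {v w : Fin 2 → F[X]} {n m : ℕ} (hv : IsPrimitiveOfDegree v n)
    (hw : IsPrimitiveOfDegree w m) : IsPrimitiveOfDegree (symSq v w) (n + m) where
  span_eq_top := by
    refine span_range_eq_top_iff_forall_isMaximal.mpr fun M hM ↦ ?_
    rw [map_symSq]
    exact symSq_ne_zero (span_range_eq_top_iff_forall_isMaximal.mp hv.span_eq_top M hM)
      (span_range_eq_top_iff_forall_isMaximal.mp hw.span_eq_top M hM)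
  natDegree_le i := by
    have hdeg (i j : Fin 2) : (v i * w j).natDegree ≤ n + m :=
      natDegree_mul_le_of_le (hv.natDegree_le i) (hw.natDegree_le j)
    fin_cases i
    exacts [hdeg 0 0, natDegree_add_le_of_degree_le (hdeg 0 1) (hdeg 1 0), hdeg 1 1]
  coeff_ne_zero := by
    have hcoeff (i j : Fin 2) : (v i * w j).coeff (n + m) = (v i).coeff n * (w j).coeff m :=
      coeff_mul_add_eq_of_natDegree_le (hv.natDegree_le i) (hw.natDegree_le j)
    convert! symSq_ne_zero hv.coeff_ne_zero hw.coeff_ne_zero using 1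
    ext i
    fin_cases i <;> simp [_root_.symSq, hcoeff]

lemma aeval {v : ι → F[X]} {n : ℕ} (hv : IsPrimitiveOfDegree v n) {φ : κ → MvPolynomial ι F}
    {d : ℕ} (hφ : ∀ j, (φ j).IsHomogeneous d)
    (hφ₀ : ∀ (L : Type u) [CommRing L] [IsDomain L] [Algebra F L] (x : ι → L), x ≠ 0 →
      (fun j ↦ MvPolynomial.aeval x (φ j)) ≠ 0) :
    IsPrimitiveOfDegree (fun j ↦ MvPolynomial.aeval v (φ j)) (d * n) where
  span_eq_top := by
    refine span_range_eq_top_iff_forall_isMaximal.mpr fun M hM ↦ ?_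
    convert! hφ₀ (F[X] ⧸ M) _ (span_range_eq_top_iff_forall_isMaximal.mp hv.span_eq_top M hM)
      using 1
    ext j
    exact MvPolynomial.comp_aeval_apply _ (Ideal.Quotient.mkₐ F M) (φ j)
  natDegree_le j := natDegree_aeval_le_of_isHomogeneous (hφ j) hv.natDegree_le
  coeff_ne_zero := by
    simpa only [coeff_aeval_of_isHomogeneous (hφ _) hv.natDegree_le] using
      hφ₀ F _ hv.coeff_ne_zero

end IsPrimitiveOfDegree

lemma isPrimitiveOfDegree_X_pow (n : ℕ) : IsPrimitiveOfDegree ![(X ^ n : F[X]), 1] n where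
  span_eq_top := Ideal.eq_top_of_isUnit_mem _ (Ideal.subset_span ⟨1, rfl⟩) isUnit_one
  natDegree_le i := by fin_cases i <;> simp
  coeff_ne_zero := Function.ne_iff.mpr ⟨0, by simp⟩

section HasHeight

variable {K : Type*} [Field K] [Algebra F[X] K] {α : ι → K} {n : ℕ}

variable (F) in
/-- The vector `α`, read as a point of projective space over `K ⊇ F(X)`, is `F(X)`-rational of
height `n`: it is proportional to a primitive vector of polynomials of degree `n`. The height is a
relation rather than a function because most points over `K` are not `F(X)`-rational. -/
def HasHeight (α : ι → K) (n : ℕ) : Prop :=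
  ∃ v : ι → F[X], IsPrimitiveOfDegree v n ∧ ∃ c : K, c ≠ 0 ∧ algebraMap F[X] K ∘ v = c • α

namespace HasHeight

lemma of_smul {c : K} (hc : c ≠ 0) (h : HasHeight F (c • α) n) : HasHeight F α n := by
  obtain ⟨v, hv, b, hb, hvα⟩ := h
  exact ⟨v, hv, b * c, mul_ne_zero hb hc, by rw [hvα, smul_smul]⟩

lemma X_pow (n : ℕ) : HasHeight F ![algebraMap F[X] K X ^ n, 1] n := by
  refine ⟨_, isPrimitiveOfDegree_X_pow n, 1, one_ne_zero, funext fun i ↦ ?_⟩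
  fin_cases i <;> simp

lemma symSq {α β : Fin 2 → K} {m : ℕ} (hα : HasHeight F α n) (hβ : HasHeight F β m) :
    HasHeight F (symSq α β) (n + m) := by
  obtain ⟨v, hv, a, ha, hvα⟩ := hα
  obtain ⟨w, hw, b, hb, hwβ⟩ := hβ
  exact ⟨_, hv.symSq hw, a * b, mul_ne_zero ha hb, by
    rw [map_symSq, hvα, hwβ, symSq_smul_smul]⟩

lemma aeval [Algebra F K] [IsScalarTower F F[X] K] (hα : HasHeight F α n)
    {φ : κ → MvPolynomial ι F} {d : ℕ} (hφ : ∀ j, (φ j).IsHomogeneous d)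
    (hφ₀ : ∀ (L : Type u) [CommRing L] [IsDomain L] [Algebra F L] (x : ι → L), x ≠ 0 →
      (fun j ↦ MvPolynomial.aeval x (φ j)) ≠ 0) :
    HasHeight F (fun j ↦ MvPolynomial.aeval α (φ j)) (d * n) := by
  obtain ⟨v, hv, c, hc, hvα⟩ := hα
  refine ⟨_, hv.aeval hφ hφ₀, c ^ d, pow_ne_zero d hc, funext fun j ↦ ?_⟩
  rw [Pi.smul_apply, smul_eq_mul, ← aeval_smul_of_isHomogeneous (hφ j), ← hvα]
  exact MvPolynomial.comp_aeval_apply _ (IsScalarTower.toAlgHom F F[X] K) (φ j)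

variable [FaithfulSMul F[X] K]

lemma ne_zero (hα : HasHeight F α n) : α ≠ 0 := by
  obtain ⟨v, hv, c, -, hvα⟩ := hα
  obtain ⟨i, hvi, -⟩ := hv.exists_coeff_ne_zero
  rintro rfl
  refine hvi <| FaithfulSMul.algebraMap_injective F[X] K ?_
  simpa using congrFun hvα i

lemma unique {m : ℕ} (hn : HasHeight F α n) (hm : HasHeight F α m) : n = m := by
  have hinj := FaithfulSMul.algebraMap_injective F[X] K
  obtain ⟨v, hv, a, -, hvα⟩ := hn
  obtain ⟨w, hw, b, -, hwα⟩ := hm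
  have hprop (i j : ι) : w i * v j = v i * w j := hinj <| by
    have hv' (i : ι) : algebraMap F[X] K (v i) = a * α i := congrFun hvα i
    have hw' (i : ι) : algebraMap F[X] K (w i) = b * α i := congrFun hwα i
    rw [map_mul, map_mul, hv', hv', hw', hw']
    ring
  obtain ⟨i, hvi, -⟩ := hv.exists_coeff_ne_zero
  obtain ⟨j, hwj, -⟩ := hw.exists_coeff_ne_zero
  have hwi : w i ≠ 0 := left_ne_zero_of_mul <| (hprop i j).trans_ne (mul_ne_zero hvi hwj)
  exact le_antisymm (hv.le_of_smul_eq_smul hw hwi hvi (funext (hprop i)))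
    (hw.le_of_smul_eq_smul hv hvi hwi (funext fun j ↦ (hprop i j).symm))

lemma add_natDegree_le {v : ι → F[X]} (hn : HasHeight F (algebraMap F[X] K ∘ v) n) {g : F[X]}
    {D : ℕ} (hg : ∀ i, g ∣ v i) (hD : ∀ i, (v i).natDegree ≤ D) : n + g.natDegree ≤ D := by
  have hinj := FaithfulSMul.algebraMap_injective F[X] K
  obtain ⟨w, hw, c, -, hwv⟩ := hn
  have hwv' (i : ι) : algebraMap F[X] K (w i) = c * algebraMap F[X] K (v i) := congrFun hwv i
  have hprop (i j : ι) : v j * w i = w j * v i := hinj <| by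
    rw [map_mul, map_mul, hwv', hwv']
    ring
  obtain ⟨j, hwj, hj⟩ := hw.exists_coeff_ne_zero
  obtain ⟨s, hs⟩ : w j ∣ v j :=
    dvd_of_forall_dvd_mul_of_span_eq_top hw.span_eq_top fun i ↦ ⟨v i, hprop i j⟩
  have hvw (i : ι) : v i = s * w i :=
    mul_left_cancel₀ hwj <| by rw [← hprop, hs, mul_assoc]
  have hgs : g ∣ s := dvd_of_forall_dvd_mul_of_span_eq_top hw.span_eq_top fun i ↦ hvw i ▸ hg i
  have hs0 : s ≠ 0 := by
    rintro rfl
    refine hwj <| hinj ?_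
    rw [hwv', hvw, zero_mul, map_zero, mul_zero]
  calc n + g.natDegree ≤ (w j).natDegree + s.natDegree :=
        add_le_add (le_natDegree_of_ne_zero hj) (natDegree_le_of_dvd hgs hs0)
    _ = (v j).natDegree := by rw [hvw, natDegree_mul hs0 hwj, add_comm]
    _ ≤ D := hD j

end HasHeight

variable [FaithfulSMul F[X] K]

lemma exists_hasHeight [Finite ι] {v : ι → F[X]} (hv : v ≠ 0) :
    ∃ n, HasHeight F (algebraMap F[X] K ∘ v) n := by
  obtain ⟨g, w, hg, rfl, hw⟩ := exists_eq_smul_span_eq_top hv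
  obtain ⟨n, hn⟩ := IsPrimitiveOfDegree.of_span_eq_top hw
  have hg' : algebraMap F[X] K g ≠ 0 := (FaithfulSMul.algebraMap_eq_zero_iff F[X] K).not.mpr hg
  refine ⟨n, w, hn, (algebraMap F[X] K g)⁻¹, inv_ne_zero hg', funext fun i ↦ ?_⟩
  simp [hg']

lemma exists_hasHeight_of_map_eq_smul [Finite ι] {v : ι → F[X]} {c : K} (hc : c ≠ 0) (hα : α ≠ 0)
    (h : algebraMap F[X] K ∘ v = c • α) : ∃ n, HasHeight F α n := by
  have hv : v ≠ 0 := by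
    rintro rfl
    refine smul_ne_zero hc hα <| h ▸ funext fun i ↦ map_zero _
  obtain ⟨n, hn⟩ := exists_hasHeight (K := K) hv
  exact ⟨n, (h ▸ hn).of_smul hc⟩

lemma HasHeight.of_symSq {α β : Fin 2 → K} {m : ℕ} (hαβ : HasHeight F (_root_.symSq α β) n)
    (hβ : HasHeight F β m) : ∃ k, HasHeight F α k ∧ k + m = n := by
  suffices ∃ k, HasHeight F α k from
    this.imp fun k hk ↦ ⟨hk, (hk.symSq hβ).unique hαβ⟩
  obtain ⟨z, -, l, hl, hzαβ⟩ := id hαβ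
  obtain ⟨u, -, c, hc, huβ⟩ := id hβ
  have hz0 : algebraMap F[X] K (z 0) = l * (α 0 * β 0) := congrFun hzαβ 0
  have hz1 : algebraMap F[X] K (z 1) = l * (α 0 * β 1 + α 1 * β 0) := congrFun hzαβ 1
  have hz2 : algebraMap F[X] K (z 2) = l * (α 1 * β 1) := congrFun hzαβ 2
  have hu0 : algebraMap F[X] K (u 0) = c * β 0 := congrFun huβ 0
  have hu1 : algebraMap F[X] K (u 1) = c * β 1 := congrFun huβ 1
  have hα0 : α ≠ 0 := by
    rintro rfl
    refine hαβ.ne_zero <| funext fun i ↦ ?_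
    fin_cases i <;> simp [_root_.symSq]
  by_cases h : β 1 = 0
  · have h0 : β 0 ≠ 0 := fun h0 ↦ hβ.ne_zero <| funext <| Fin.forall_fin_two.mpr ⟨h0, h⟩
    refine exists_hasHeight_of_map_eq_smul (v := ![z 0, z 1]) (c := l * β 0) (mul_ne_zero hl h0) hα0
      (funext <| Fin.forall_fin_two.mpr ⟨?_, ?_⟩)
    · exact hz0.trans (by rw [Pi.smul_apply, smul_eq_mul]; ring)
    · exact hz1.trans (by rw [Pi.smul_apply, smul_eq_mul, h]; ring)
  · refine exists_hasHeight_of_map_eq_smul (v := ![z 1 * u 1 - z 2 * u 0, z 2 * u 1])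
      (c := l * c * β 1 ^ 2) (by positivity) hα0 (funext <| Fin.forall_fin_two.mpr ⟨?_, ?_⟩)
    · change algebraMap F[X] K (z 1 * u 1 - z 2 * u 0) = l * c * β 1 ^ 2 * α 0
      rw [map_sub, map_mul, map_mul, hz1, hz2, hu0, hu1]
      ring
    · change algebraMap F[X] K (z 2 * u 1) = l * c * β 1 ^ 2 * α 1
      rw [map_mul, hz2, hu1]
      ring

end HasHeight

end Heights

/-! ### The parallelogram law -/

section AddSubMap

instance isElliptic_baseChange {R : Type*} (A : Type*) [CommRing R] [CommRing A] [Algebra R A]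
    (E : Affine R) [E.IsElliptic] : (E⁄A).IsElliptic :=
  inferInstanceAs (E.map (algebraMap R A)).IsElliptic

lemma aeval_addSubMap {R A : Type*} [CommRing R] [CommRing A] [Algebra R A]
    (E : Affine R) (x : Fin 3 → A) (i : Fin 3) :
    MvPolynomial.aeval x (E.addSubMap i) = ((E⁄A).addSubMap i).eval x := by
  have h2 : algebraMap R A 2 = 2 := map_ofNat _ 2
  have h4 : algebraMap R A 4 = 4 := map_ofNat _ 4
  fin_cases i <;> simp [addSubMap, WeierstrassCurve.baseChange, h2, h4]

lemma aeval_addSubMap_ne_zero {R A : Type*} [CommRing R] [CommRing A] [IsReduced A] [Algebra R A]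
    (E : Affine R) [E.IsElliptic] {x : Fin 3 → A} (hx : x ≠ 0) :
    (fun i ↦ MvPolynomial.aeval x (E.addSubMap i)) ≠ 0 := by
  simpa only [aeval_addSubMap] using (E⁄A).addSubMap_ne_zero hx

lemma eval_addSubMap {R : Type*} [CommRing R] (W : Affine R) (s t u : R) :
    (fun i ↦ (W.addSubMap i).eval ![s, t, u]) =
      ![s ^ 2 - W.b₄ * s * u - W.b₆ * t * u - W.b₈ * u ^ 2,
        2 * t * s + W.b₂ * s * u + W.b₄ * t * u + W.b₆ * u ^ 2, t ^ 2 - 4 * s * u] := by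
  ext i
  fin_cases i <;> simp [addSubMap]

variable {K : Type*} [Field K] {W : Affine K}

lemma eval_addSubMap_sym2x_zero_right (A : W.Point) :
    (fun i ↦ (W.addSubMap i).eval (A.sym2x 0)) = A.sym2x A := by
  rcases A with _ | ⟨x, y, h⟩
  · rw [← Point.zero_def, Point.sym2x_zero_zero, eval_addSubMap]
    exact Matrix.vec3_eq (by ring) (by ring) (by ring)
  · rw [Point.sym2x_some_zero, Point.sym2x_some_some, eval_addSubMap]
    exact Matrix.vec3_eq (by ring) (by ring) (by ring)

variable [DecidableEq K]

lemma exists_eval_addSubMap_sym2x_self_of_Y_eq [W.IsElliptic] {x y : K} {h : W.Nonsingular x y}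
    (hy : y = W.negY x y) :
    ∃ c : K, c ≠ 0 ∧ (fun i ↦ (W.addSubMap i).eval ((Point.some x y h).sym2x (.some x y h))) =
      c • (Point.some x y h + .some x y h).sym2x 0 := by
  have hE := (equation_iff ..).mp h.1
  obtain ⟨c, heval⟩ : ∃ c, (fun i ↦ (W.addSubMap i).eval
      ((Point.some x y h).sym2x (.some x y h))) = ![c, 0, 0] := by
    rw [Point.sym2x_some_some, eval_addSubMap]
    refine ⟨_, Matrix.vec3_eq rfl ?_ (by ring)⟩
    rw [negY] at hy
    simp only [b₂, b₄, b₆]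
    linear_combination -4 * hE + (2 * y + W.a₁ * x + W.a₃) * hy
  refine ⟨c, fun h0 ↦ W.addSubMap_ne_zero (Point.sym2x_ne_zero (.some x y h) (.some x y h)) ?_, ?_⟩
  · rw [heval, h0]
    simp
  · rw [heval, Point.add_self_of_Y_eq hy, Point.sym2x_zero_zero, Matrix.smul_vec3, smul_eq_mul,
      mul_one, smul_zero]

lemma exists_eval_addSubMap_sym2x_self_of_Y_ne {x y : K} {h : W.Nonsingular x y}
    (hy : y ≠ W.negY x y) :
    ∃ c : K, c ≠ 0 ∧ (fun i ↦ (W.addSubMap i).eval ((Point.some x y h).sym2x (.some x y h))) =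
      c • (Point.some x y h + .some x y h).sym2x 0 := by
  have hE := (equation_iff ..).mp h.1
  have hD0 : y - W.negY x y ≠ 0 := sub_ne_zero.mpr hy
  have hD : y - W.negY x y = 2 * y + W.a₁ * x + W.a₃ := by rw [negY]; ring
  refine ⟨(y - W.negY x y) ^ 2, pow_ne_zero 2 hD0, ?_⟩
  rw [Point.add_self_of_Y_ne hy, Point.sym2x_some_zero, Point.sym2x_some_some, addX,
    slope_of_Y_ne rfl hy, eval_addSubMap, Matrix.smul_vec3]
  generalize y - W.negY x y = D at hD0 hD ⊢
  simp only [smul_eq_mul, b₂, b₄, b₆, b₈]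
  refine Matrix.vec3_eq ?_ ?_ (by ring)
  · field_simp
    rw [hD]
    linear_combination (W.a₁ ^ 2 + 4 * W.a₂ + 8 * x) * hE
  · rw [hD]
    linear_combination -4 * hE

lemma exists_eval_addSubMap_sym2x_self [W.IsElliptic] (A : W.Point) :
    ∃ c : K, c ≠ 0 ∧ (fun i ↦ (W.addSubMap i).eval (A.sym2x A)) = c • (A + A).sym2x 0 := by
  rcases A with _ | ⟨x, y, h⟩
  · refine ⟨1, one_ne_zero, ?_⟩
    rw [← Point.zero_def, add_zero, one_smul, eval_addSubMap_sym2x_zero_right]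
  · by_cases hy : y = W.negY x y
    exacts [exists_eval_addSubMap_sym2x_self_of_Y_eq hy,
      exists_eval_addSubMap_sym2x_self_of_Y_ne hy]

lemma addX_slope_mul_sq {x₁ x₂ y₁ y₂ : K} (h₁ : W.Equation x₁ y₁)
    (h₂ : W.Equation x₂ y₂) (hx : x₁ ≠ x₂) :
    W.addX x₁ x₂ (W.slope x₁ x₂ y₁ y₂) * (x₁ - x₂) ^ 2 =
      x₁ ^ 2 * x₂ + x₁ * x₂ ^ 2 + 2 * W.a₂ * x₁ * x₂ + W.a₄ * (x₁ + x₂) + 2 * W.a₆ +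
        (y₁ * W.negY x₂ y₂ + W.negY x₁ y₁ * y₂) := by
  have hx' : x₁ - x₂ ≠ 0 := sub_ne_zero.mpr hx
  rw [addX, slope_of_X_ne hx, negY, negY]
  field_simp
  linear_combination (equation_iff ..).mp h₁ + (equation_iff ..).mp h₂

lemma exists_eval_addSubMap_sym2x_of_X_ne {x₁ x₂ y₁ y₂ : K} {h₁ : W.Nonsingular x₁ y₁}
    {h₂ : W.Nonsingular x₂ y₂} (hx : x₁ ≠ x₂) :
    ∃ c : K, c ≠ 0 ∧
      (fun i ↦ (W.addSubMap i).eval ((Point.some x₁ y₁ h₁).sym2x (.some x₂ y₂ h₂))) =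
        c • (Point.some x₁ y₁ h₁ + .some x₂ y₂ h₂).sym2x (.some x₁ y₁ h₁ - .some x₂ y₂ h₂) := by
  have hE₁ := (equation_iff ..).mp h₁.1
  have hE₂ := (equation_iff ..).mp h₂.1
  have hadd := addX_slope_mul_sq h₁.1 h₂.1 hx
  have hsub := addX_slope_mul_sq h₁.1 ((equation_neg ..).mpr h₂.1) hx
  rw [negY_negY] at hsub
  have hx' : (x₁ - x₂) ^ 2 ≠ 0 := pow_ne_zero 2 (sub_ne_zero.mpr hx)
  refine ⟨(x₁ - x₂) ^ 2, hx', ?_⟩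
  rw [sub_eq_add_neg (Point.some ..), Point.neg_some, Point.add_of_X_ne hx, Point.add_of_X_ne hx,
    Point.sym2x_some_some, Point.sym2x_some_some, eval_addSubMap, Matrix.smul_vec3]
  generalize W.addX x₁ x₂ (W.slope x₁ x₂ y₁ y₂) = u at *
  generalize W.addX x₁ x₂ (W.slope x₁ x₂ y₁ (W.negY x₂ y₂)) = v at *
  simp only [smul_eq_mul, negY, b₂, b₄, b₆, b₈] at hadd hsub ⊢
  refine Matrix.vec3_eq (mul_left_cancel₀ hx' ?_) ?_ (by ring)
  · trans (u * (x₁ - x₂) ^ 2) * (v * (x₁ - x₂) ^ 2)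
    · rw [hadd, hsub]
      linear_combination
        ((W.a₁ * x₁ + W.a₃) ^ 2 + 4 * y₁ * (y₁ + W.a₁ * x₁ + W.a₃)) * hE₂ +
        ((W.a₁ * x₂ + W.a₃) ^ 2 + 4 * (x₂ ^ 3 + W.a₂ * x₂ ^ 2 + W.a₄ * x₂ + W.a₆)) * hE₁
    · ring
  · linear_combination -hadd - hsub

theorem exists_eval_addSubMap_sym2x [W.IsElliptic] (A B : W.Point) :
    ∃ c : K, c ≠ 0 ∧ (fun i ↦ (W.addSubMap i).eval (A.sym2x B)) = c • (A + B).sym2x (A - B) := by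
  rcases A with _ | ⟨x₁, y₁, h₁⟩
  · refine ⟨1, one_ne_zero, ?_⟩
    rw [← Point.zero_def, zero_add, zero_sub, Point.sym2x_neg_right, Point.sym2x_comm, one_smul,
      eval_addSubMap_sym2x_zero_right]
  rcases B with _ | ⟨x₂, y₂, h₂⟩
  · refine ⟨1, one_ne_zero, ?_⟩
    rw [← Point.zero_def, add_zero, sub_zero, one_smul, eval_addSubMap_sym2x_zero_right]
  by_cases hx : x₁ = x₂
  · rcases Point.X_eq_iff (h₁ := h₁) (h₂ := h₂).mp hx with h | h
    · rw [h, sub_self]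
      exact exists_eval_addSubMap_sym2x_self _
    · rw [h, Point.sym2x_neg_left, neg_add_cancel, sub_eq_add_neg, Point.sym2x_comm 0, ← neg_add,
        Point.sym2x_neg_left]
      exact exists_eval_addSubMap_sym2x_self _
  · exact exists_eval_addSubMap_sym2x_of_X_ne hx

end AddSubMap

section Parallelogram

variable {F : Type u} [Field F] {E : Affine F} [E.IsElliptic] {K : Type*} [Field K]
  [DecidableEq K] [Algebra F K] [Algebra F[X] K] [FaithfulSMul F[X] K] [IsScalarTower F F[X] K]

theorem HasHeight.xRep_parallelogram {A B : (E⁄K).Point} {n m d : ℕ}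
    (hA : HasHeight F A.xRep n) (hB : HasHeight F B.xRep m) (hAB : HasHeight F (A - B).xRep d) :
    ∃ k, HasHeight F (A + B).xRep k ∧ k + d = 2 * (n + m) := by
  obtain ⟨c, hc, h⟩ := exists_eval_addSubMap_sym2x A B
  have hsum : HasHeight F (_root_.symSq (A + B).xRep (A - B).xRep) (2 * (n + m)) :=
    .of_smul hc <| (congrArg (HasHeight F · _) <|
      (funext (aeval_addSubMap E (A.sym2x B))).trans h).mp <|
        (hA.symSq hB).aeval E.isHomogeneous_addSubMap fun _ _ _ _ _ ↦ aeval_addSubMap_ne_zero E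
  exact hsum.of_symSq hAB

lemma exists_hasHeight_xRep_add_zsmul {P Q : (E⁄K).Point} {p q r : ℕ}
    (hP : HasHeight F P.xRep p) (hQ : HasHeight F Q.xRep q) (hQP : HasHeight F (Q + P).xRep r)
    (n : ℤ) : ∃ k, HasHeight F (Q + n • P).xRep k := by
  suffices (∃ k, HasHeight F (Q + n • P).xRep k) ∧ ∃ k, HasHeight F (Q + (n + 1) • P).xRep k from
    this.1
  induction n with
  | zero => exact ⟨⟨q, by simpa using hQ⟩, ⟨r, by simpa using hQP⟩⟩
  | succ n ih =>
    obtain ⟨⟨k, hk⟩, l, hl⟩ := ih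
    obtain ⟨m, hm, -⟩ := hl.xRep_parallelogram hP (d := k) <| by
      rwa [add_zsmul, one_zsmul, ← add_assoc, add_sub_cancel_right]
    exact ⟨⟨l, hl⟩, m, by rwa [add_zsmul _ _ 1, one_zsmul, ← add_assoc]⟩
  | pred n ih =>
    obtain ⟨⟨k, hk⟩, l, hl⟩ := ih
    obtain ⟨m, hm, -⟩ := hk.xRep_parallelogram (B := -P) (Point.xRep_neg P ▸ hP) (d := l) <| by
      rwa [sub_neg_eq_add, add_assoc, ← add_one_zsmul]
    exact ⟨⟨m, by rwa [sub_zsmul, one_zsmul, ← add_assoc]⟩, k, by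
      rwa [sub_add_cancel]⟩

theorem sq_le_four_mul_of_hasHeight_xRep {P Q : (E⁄K).Point} {q r : ℕ}
    (hP : HasHeight F P.xRep 1) (hQ : HasHeight F Q.xRep q) (hQP : HasHeight F (Q + P).xRep r) :
    ((r : ℤ) - 1 - q) ^ 2 ≤ 4 * q := by
  choose d hd using exists_hasHeight_xRep_add_zsmul hP hQ hQP
  have hd0 : d 0 = q := (hd 0).unique (by simpa using hQ)
  have hd1 : d 1 = r := (hd 1).unique (by simpa using hQP)
  rw [← hd0, ← hd1]
  refine sq_le_four_mul_of_second_difference (d := fun n ↦ (d n : ℤ)) (fun n ↦ ?_)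
    (fun n ↦ Int.natCast_nonneg _) fun n h h' ↦ ?_
  · obtain ⟨k, hk, hsum⟩ := (hd n).xRep_parallelogram hP (d := d (n - 1)) <| by
      rw [add_sub_assoc, sub_eq_add_neg (n • P), ← sub_one_zsmul]
      exact hd (n - 1)
    rw [(hd (n + 1)).unique (m := k) (by rwa [add_zsmul, one_zsmul, ← add_assoc])]
    omega
  · obtain ⟨k, -, hsum⟩ := (hd (n + 1)).xRep_parallelogram (hd n) (d := 1) <| by
      rwa [add_zsmul, one_zsmul, add_sub_add_left_eq_sub, add_sub_cancel_left]
    omega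

end Parallelogram

/-! ### The coordinate ring -/

section CoordinateRing

variable {F S : Type*} [CommRing F] {E : Affine F} [CommRing S] [Algebra F S]

/-- The evaluation of regular functions on an affine Weierstrass curve over `F` at a point with
coordinates in an `F`-algebra. -/
noncomputable def evalPoint {a b : S} (h : (E⁄S).Equation a b) : E.CoordinateRing →ₐ[F] S :=
  AdjoinRoot.liftAlgHom E.polynomial (aeval a) b <| by
    rw [equation_iff'] at h
    simpa [Affine.polynomial, eval₂_pow, add_mul, ← add_assoc] using h

section

variable {a b : S} (h : (E⁄S).Equation a b)

lemma evalPoint_mk_Y : evalPoint h (mk E Y) = b :=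
  AdjoinRoot.liftAlgHom_root ..

lemma evalPoint_algebraMap (p : F[X]) : evalPoint h (algebraMap F[X] _ p) = aeval a p :=
  AdjoinRoot.liftAlgHom_of ..

lemma evalPoint_smul_basis (p q : F[X]) :
    evalPoint h (p • 1 + q • mk E Y) = aeval a p + aeval a q * b := by
  simp only [Algebra.smul_def, mul_one, map_add, map_mul, evalPoint_algebraMap, evalPoint_mk_Y]

end

variable (E) in
lemma equation_mk_Y :
    (E⁄E.CoordinateRing).Equation (algebraMap F[X] E.CoordinateRing X) (mk E Y) := by
  rw [equation_iff']
  refine AdjoinRoot.mk_eq_zero.mpr ⟨1, ?_⟩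
  simp only [Affine.polynomial, ← C_eq_algebraMap, IsScalarTower.algebraMap_apply F F[X] F[X][Y]]
  simp only [map_add, map_mul, map_pow]
  ring

variable (E) in
/-- The automorphism `f(x, y) ↦ f(x, -y - a₁x - a₃)` of the coordinate ring induced by negation. -/
noncomputable def conj : E.CoordinateRing →ₐ[F] E.CoordinateRing :=
  evalPoint ((equation_neg ..).mpr (equation_mk_Y E))

lemma conj_mk_Y : conj E (mk E Y) =
    (E⁄E.CoordinateRing).negY (algebraMap F[X] E.CoordinateRing X) (mk E Y) :=
  evalPoint_mk_Y _

lemma conj_algebraMap (p : F[X]) :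
    conj E (algebraMap F[X] E.CoordinateRing p) = algebraMap F[X] E.CoordinateRing p := by
  rw [conj, evalPoint_algebraMap, aeval_algebraMap_apply, aeval_X_left_apply]

lemma evalPoint_conj {a b : S} (h : (E⁄S).Equation a b) (z : E.CoordinateRing) :
    evalPoint h (conj E z) = evalPoint ((equation_neg ..).mpr h) z := by
  obtain ⟨p, q, rfl⟩ := exists_smul_basis_eq z
  have hY : evalPoint h (conj E (mk E Y)) = (E⁄S).negY a b := by
    rw [conj_mk_Y, ← baseChange_negY, evalPoint_algebraMap, aeval_X, evalPoint_mk_Y]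
  simp only [evalPoint_smul_basis]
  simp only [Algebra.smul_def, map_add, map_mul, conj_algebraMap, evalPoint_algebraMap,
    mul_one, hY]

lemma conj_conj (z : E.CoordinateRing) : conj E (conj E z) = z := by
  obtain ⟨p, q, rfl⟩ := exists_smul_basis_eq z
  have hY : conj E (conj E (mk E Y)) = mk E Y := by
    exact (evalPoint_conj _ _).trans ((evalPoint_mk_Y _).trans (negY_negY ..))
  simp only [Algebra.smul_def, map_add, map_mul, conj_algebraMap, map_one, hY]

lemma algebraMap_norm (z : E.CoordinateRing) :
    algebraMap F[X] E.CoordinateRing (Algebra.norm F[X] z) = z * conj E z := by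
  obtain ⟨p, q, rfl⟩ := exists_smul_basis_eq z
  have h := (equation_iff' ..).mp (equation_mk_Y E)
  rw [norm_smul_basis]
  simp only [Algebra.smul_def, map_add, map_mul, conj_algebraMap, map_one, conj_mk_Y, negY]
  simp only [baseChange_a₁, baseChange_a₂, baseChange_a₃, baseChange_a₄, baseChange_a₆,
    C_eq_algebraMap, ← IsScalarTower.algebraMap_apply, map_sub, map_pow, map_mul, map_add] at h ⊢
  linear_combination algebraMap F[X] _ q ^ 2 * h

lemma trace_smul_basis (p q : F[X]) :
    Algebra.trace F[X] E.CoordinateRing (p • 1 + q • mk E Y) =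
      2 * p - q * (C E.a₁ * X + C E.a₃) := by
  simp_rw [Algebra.trace_eq_matrix_trace <| CoordinateRing.basis E, Matrix.trace_fin_two,
    Algebra.leftMulMatrix_eq_repr_mul, basis_zero, mul_one, basis_one, smul_basis_mul_Y, map_add,
    Finsupp.add_apply, map_smul, Finsupp.smul_apply, ← basis_zero, ← basis_one,
    Module.Basis.repr_self_apply, if_pos, zero_ne_one, one_ne_zero,
    if_false, smul_eq_mul]
  ring1

lemma algebraMap_trace (z : E.CoordinateRing) :
    algebraMap F[X] E.CoordinateRing (Algebra.trace F[X] _ z) = z + conj E z := by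
  obtain ⟨p, q, rfl⟩ := exists_smul_basis_eq z
  rw [trace_smul_basis]
  simp only [Algebra.smul_def, map_add, map_mul, map_sub, map_ofNat, map_one, conj_algebraMap,
    conj_mk_Y, negY, baseChange_a₁, baseChange_a₃, C_eq_algebraMap,
    ← IsScalarTower.algebraMap_apply]
  ring

lemma norm_conj (z : E.CoordinateRing) : Algebra.norm F[X] (conj E z) = Algebra.norm F[X] z := by
  apply FaithfulSMul.algebraMap_injective F[X] E.CoordinateRing
  rw [algebraMap_norm, algebraMap_norm, conj_conj, mul_comm]

end CoordinateRing

section Field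

variable {F : Type*} [Field F] {E : Affine F}

lemma two_mul_natDegree_trace_le (z : E.CoordinateRing) :
    2 * (Algebra.trace F[X] E.CoordinateRing z).natDegree ≤ (Algebra.norm F[X] z).natDegree := by
  obtain ⟨p, q, rfl⟩ := exists_smul_basis_eq z
  obtain ⟨hp, hq⟩ := max_le_iff.mp ((degree_norm_smul_basis (W' := E) p q).symm.trans_le
    degree_le_natDegree)
  have hp : 2 * p.natDegree ≤ (Algebra.norm F[X] (p • 1 + q • mk E Y)).natDegree := by
    rw [← natDegree_pow]
    exact natDegree_le_of_degree_le (by rwa [degree_pow])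
  have hq : 2 * (q * (C E.a₁ * X + C E.a₃)).natDegree ≤
      (Algebra.norm F[X] (p • 1 + q • mk E Y)).natDegree := by
    rcases eq_or_ne q 0 with rfl | hq0
    · rw [zero_mul, natDegree_zero]
      exact zero_le
    · rw [degree_eq_natDegree hq0, two_nsmul] at hq
      norm_cast at hq
      have := (natDegree_mul_le (p := q)).trans (Nat.add_le_add_left (natDegree_linear_le
        (a := E.a₁) (b := E.a₃)) _)
      omega
  rw [trace_smul_basis]
  have h2p : (2 * p).natDegree ≤ p.natDegree := by
    exact_mod_cast natDegree_C_mul_le (2 : F) p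
  have := natDegree_sub_le (2 * p) (q * (C E.a₁ * X + C E.a₃))
  omega

lemma X_sub_C_dvd_norm {L : Type*} [Field L] [Algebra F L] {a : F} {b : L}
    {h : (E⁄L).Equation (algebraMap F L a) b} {z : E.CoordinateRing} (hz : evalPoint h z = 0) :
    X - C a ∣ Algebra.norm F[X] z := by
  apply dvd_iff_isRoot.mpr (FaithfulSMul.algebraMap_injective F L _)
  rw [map_zero, ← coe_aeval_eq_eval, ← aeval_algebraMap_apply, ← evalPoint_algebraMap h,
    algebraMap_norm, map_mul, hz, zero_mul]

lemma X_sub_C_sq_dvd_norm {L : Type*} [Field L] [Algebra F L] {a : F} {b c : L} (hbc : b ≠ c)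
    {hb : (E⁄L).Equation (algebraMap F L a) b} {hc : (E⁄L).Equation (algebraMap F L a) c}
    {z : E.CoordinateRing} (hzb : evalPoint hb z = 0) (hzc : evalPoint hc z = 0) :
    (X - C a) ^ 2 ∣ Algebra.norm F[X] z := by
  obtain ⟨p, q, rfl⟩ := exists_smul_basis_eq z
  simp only [evalPoint_smul_basis, aeval_algebraMap_apply] at hzb hzc
  have hq : algebraMap F L (aeval a q) = 0 :=
    (mul_eq_zero.mp (by linear_combination hzb - hzc)).resolve_right (sub_ne_zero.mpr hbc)
  rw [hq, zero_mul, add_zero, map_eq_zero] at hzb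
  rw [map_eq_zero] at hq
  obtain ⟨p, rfl⟩ := dvd_iff_isRoot.mpr hzb
  obtain ⟨q, rfl⟩ := dvd_iff_isRoot.mpr hq
  exact ⟨Algebra.norm F[X] (p • 1 + q • mk E Y), by simp only [norm_smul_basis]; ring⟩

lemma conj_eq_negY {η : E.CoordinateRing}
    (hη : (E⁄E.CoordinateRing).Equation (algebraMap F[X] _ X) η) :
    conj E η = (E⁄E.CoordinateRing).negY (algebraMap F[X] _ X) η := by
  have h : (η - mk E Y) * (η - conj E (mk E Y)) = 0 := by
    rw [conj_mk_Y, negY]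
    linear_combination (equation_iff' ..).mp hη - (equation_iff' ..).mp (equation_mk_Y E)
  rcases mul_eq_zero.mp h with h | h <;> rw [sub_eq_zero.mp h]
  · exact conj_mk_Y
  · rw [conj_conj, conj_mk_Y, negY_negY]

lemma norm_eq_neg_cubic {η : E.CoordinateRing}
    (hη : (E⁄E.CoordinateRing).Equation (algebraMap F[X] _ X) η) :
    Algebra.norm F[X] η = -(X ^ 3 + C E.a₂ * X ^ 2 + C E.a₄ * X + C E.a₆) := by
  apply FaithfulSMul.algebraMap_injective F[X] E.CoordinateRing
  have h := (equation_iff' ..).mp hη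
  simp only [algebraMap_norm, conj_eq_negY hη, map_neg, map_add, map_mul, map_pow, C_eq_algebraMap,
    ← IsScalarTower.algebraMap_apply]
  simp only [negY, baseChange_a₁, baseChange_a₂, baseChange_a₃, baseChange_a₄,
    baseChange_a₆] at h ⊢
  linear_combination -h

lemma natDegree_norm_eq_three {η : E.CoordinateRing}
    (hη : (E⁄E.CoordinateRing).Equation (algebraMap F[X] _ X) η) :
    (Algebra.norm F[X] η).natDegree = 3 := by
  rw [norm_eq_neg_cubic hη]
  compute_degree!

end Field

/-! ### Fibres of the `X`-coordinate over a finite field -/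

section Fiber

variable {F : Type*} [Field F]

lemma exists_equation [IsAlgClosed F] (W : Affine F) (x : F) : ∃ y, W.Equation x y := by
  obtain ⟨y, hy⟩ := IsAlgClosed.exists_root (W.polynomial.map (evalRingHom x)) <| by
    rw [monic_polynomial.degree_map, degree_polynomial]
    exact two_ne_zero
  exact ⟨y, by rwa [IsRoot, map_evalRingHom_eval] at hy⟩

lemma setOf_equation_eq_pair {W : Affine F} {a b : F} (hb : W.Equation a b) :
    {b | W.Equation a b} = {b, W.negY a b} := by
  ext c
  refine ⟨fun h ↦ Y_eq_of_X_eq h hb rfl, ?_⟩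
  rintro (rfl | rfl)
  exacts [hb, (equation_neg ..).mpr hb]

/-- The number of points on `E` with given `X`-coordinate. -/
noncomputable def fiberCard (E : Affine F) (a : F) : ℕ := {b | E.Equation a b}.ncard

lemma fiberCard_le_two (E : Affine F) (a : F) : fiberCard E a ≤ 2 := by
  by_cases ha : ∃ b, E.Equation a b
  · obtain ⟨b, hb⟩ := ha
    rw [fiberCard, setOf_equation_eq_pair hb]
    exact (Set.ncard_insert_le ..).trans (by rw [Set.ncard_singleton])
  · push Not at ha
    simp [fiberCard, ha]

end Fiber

section Frobenius

variable {F : Type*} [Field F] [Fintype F] {E : Affine F}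

lemma equation_pow_card {S : Type*} [CommRing S] [Algebra F S] {a b : S}
    (h : (E⁄S).Equation a b) : (E⁄S).Equation (a ^ Fintype.card F) (b ^ Fintype.card F) :=
  h.baseChange (FiniteField.frobeniusAlgHom F S)

lemma negY_pow_card {S : Type*} [CommRing S] [Algebra F S] (a b : S) :
    (E⁄S).negY (a ^ Fintype.card F) (b ^ Fintype.card F) = (E⁄S).negY a b ^ Fintype.card F :=
  baseChange_negY (FiniteField.frobeniusAlgHom F S) ..

/-- The numerator of the `X`-coordinate of the sum of `(X ^ q, Y ^ q)` and `(X, η)` over the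
denominator `(X ^ q - X) ^ 2`, where `η = Y` or `η = -Y - a₁X - a₃`. -/
noncomputable def addXNumerator (η : E.CoordinateRing) : F[X] :=
  X ^ (2 * Fintype.card F + 1) + X ^ (Fintype.card F + 2) +
    2 * C E.a₂ * X ^ (Fintype.card F + 1) + C E.a₄ * (X ^ Fintype.card F + X) + 2 * C E.a₆ +
    Algebra.trace F[X] E.CoordinateRing (mk E Y ^ Fintype.card F * conj E η)

section

variable {η : E.CoordinateRing} (hη : (E⁄E.CoordinateRing).Equation (algebraMap F[X] _ X) η)
include hη

lemma algebraMap_addXNumerator :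
    algebraMap F[X] E.CoordinateRing (addXNumerator η) =
      algebraMap F[X] _ X ^ (2 * Fintype.card F + 1) +
        algebraMap F[X] _ X ^ (Fintype.card F + 2) +
        2 * algebraMap F _ E.a₂ * algebraMap F[X] _ X ^ (Fintype.card F + 1) +
        algebraMap F _ E.a₄ * (algebraMap F[X] _ X ^ Fintype.card F + algebraMap F[X] _ X) +
        2 * algebraMap F _ E.a₆ +
        (mk E Y ^ Fintype.card F * (E⁄E.CoordinateRing).negY (algebraMap F[X] _ X) η +
          (E⁄E.CoordinateRing).negY (algebraMap F[X] _ X ^ Fintype.card F)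
            (mk E Y ^ Fintype.card F) * η) := by
  simp only [addXNumerator, map_add, map_mul, map_pow, map_ofNat, algebraMap_trace, conj_conj,
    conj_mk_Y, negY_pow_card, C_eq_algebraMap, ← IsScalarTower.algebraMap_apply,
    ← conj_eq_negY hη]

lemma addXNumerator_eq_neg_norm_sub : addXNumerator η =
    -Algebra.norm F[X] (mk E Y ^ Fintype.card F - η) -
      (C E.a₂ + X ^ Fintype.card F + X) * (X ^ Fintype.card F - X) ^ 2 := by
  apply FaithfulSMul.algebraMap_injective F[X] E.CoordinateRing
  have h₁ := (equation_iff' ..).mp hη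
  have h₂ := (equation_iff' ..).mp (equation_pow_card (equation_mk_Y E))
  simp only [algebraMap_addXNumerator hη, map_sub, map_neg, map_add, map_mul, map_pow,
    algebraMap_norm, conj_eq_negY hη, conj_mk_Y, ← negY_pow_card, C_eq_algebraMap,
    ← IsScalarTower.algebraMap_apply]
  simp only [negY, baseChange_a₁, baseChange_a₂, baseChange_a₃, baseChange_a₄,
    baseChange_a₆] at h₁ h₂ ⊢
  linear_combination -h₁ - h₂

lemma natDegree_addXNumerator_le : (addXNumerator η).natDegree ≤ 2 * Fintype.card F + 1 := by
  have htrace := two_mul_natDegree_trace_le (mk E Y ^ Fintype.card F * conj E η)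
  have hnorm : (Algebra.norm F[X] (mk E Y ^ Fintype.card F * conj E η)).natDegree ≤
      Fintype.card F * 3 + 3 := by
    rw [map_mul, map_pow, norm_conj]
    grw [natDegree_mul_le, natDegree_pow, natDegree_norm_eq_three hη,
      natDegree_norm_eq_three (equation_mk_Y E)]
  have hq : 0 < Fintype.card F := Fintype.card_pos
  rw [addXNumerator]
  generalize Algebra.trace F[X] E.CoordinateRing _ = t at htrace ⊢
  compute_degree
  omega

end

section Divisibility

lemma X_sub_C_dvd_X_pow_card_sub_X (a : F) : X - C a ∣ (X ^ Fintype.card F - X : F[X]) := by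
  rw [dvd_iff_isRoot, IsRoot, eval_sub, eval_pow, eval_X, FiniteField.pow_card, sub_self]

lemma prod_X_sub_C_eq_X_pow_card_sub_X : ∏ a : F, (X - C a) = X ^ Fintype.card F - X := by
  have hq := Fintype.one_lt_card (α := F)
  have hroots := FiniteField.roots_X_pow_card_sub_X F
  have hmonic : (X ^ Fintype.card F - X : F[X]).Monic :=
    monic_X_pow_sub (by rw [degree_X]; exact_mod_cast hq)
  rw [← prod_multiset_X_sub_C_of_monic_of_roots_card_eq hmonic, hroots]
  · rfl
  · rw [hroots, FiniteField.X_pow_card_sub_X_natDegree_eq F hq]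
    rfl

lemma exists_algebraMap_eq_of_pow_card_eq {L : Type*} [CommRing L] [IsDomain L] [Algebra F L]
    {b : L} (hb : b ^ Fintype.card F = b) : ∃ a : F, algebraMap F L a = b := by
  have h := congr(aeval b $(prod_X_sub_C_eq_X_pow_card_sub_X (F := F)))
  simp only [map_prod, map_sub, aeval_X, aeval_C, map_pow, hb, sub_self,
    Finset.prod_eq_zero_iff, sub_eq_zero] at h
  obtain ⟨a, -, ha⟩ := h
  exact ⟨a, ha.symm⟩

lemma prod_X_sub_C_pow_dvd {n : F → ℕ} {f : F[X]} (h : ∀ a, (X - C a) ^ n a ∣ f) :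
    ∏ a, (X - C a) ^ n a ∣ f :=
  Finset.prod_dvd_of_coprime
    (fun _ _ _ _ hab ↦ (pairwise_coprime_X_sub_C Function.injective_id hab).pow) fun a _ ↦ h a

lemma natDegree_prod_X_sub_C_pow (n : F → ℕ) :
    (∏ a, (X - C a) ^ n a).natDegree = ∑ a, n a := by
  rw [natDegree_prod_of_monic _ _ fun a _ ↦ (monic_X_sub_C a).pow _]
  simp only [natDegree_pow, natDegree_X_sub_C, mul_one]

variable (E) in
lemma one_add_sum_fiberCard [E.IsElliptic] : 1 + ∑ a, fiberCard E a = Nat.card E.Point := by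
  rw [Nat.card_congr E.pointEquiv, WithZero, Finite.card_option, add_comm,
    Nat.card_congr (Equiv.subtypeProdEquivSigmaSubtype E.Equation), Nat.card_sigma]
  rfl

section

variable {L : Type*} [CommRing L] [Algebra F L] {a : F} {b : L}
  (h : (E⁄L).Equation (algebraMap F L a) b)

lemma evalPoint_pow_card_sub :
    evalPoint h (mk E Y ^ Fintype.card F - mk E Y) = b ^ Fintype.card F - b := by
  rw [map_sub, map_pow, evalPoint_mk_Y]

lemma evalPoint_pow_card_sub_conj :
    evalPoint h (mk E Y ^ Fintype.card F - conj E (mk E Y)) =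
      b ^ Fintype.card F - (E⁄L).negY (algebraMap F L a) b := by
  rw [map_sub, map_pow, evalPoint_conj, evalPoint_mk_Y, evalPoint_mk_Y]

end

lemma X_sub_C_pow_fiberCard_dvd_norm (a : F) :
    (X - C a) ^ fiberCard E a ∣ Algebra.norm F[X] (mk E Y ^ Fintype.card F - mk E Y) := by
  by_cases ha : ∃ b, E.Equation a b
  · obtain ⟨b, hb⟩ := ha
    have heval {b : F} (hb : (E⁄F).Equation (algebraMap F F a) b) :
        evalPoint hb (mk E Y ^ Fintype.card F - mk E Y) = 0 := by
      rw [evalPoint_pow_card_sub, FiniteField.pow_card, sub_self]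
    rw [fiberCard, setOf_equation_eq_pair hb]
    by_cases hneg : b = E.negY a b
    · rw [← hneg, Set.pair_eq_singleton, Set.ncard_singleton, pow_one]
      exact X_sub_C_dvd_norm (heval hb) (z := _)
    · rw [Set.ncard_pair hneg]
      exact X_sub_C_sq_dvd_norm hneg (heval hb) (heval ((equation_neg ..).mpr hb))
  · push Not at ha
    simp [fiberCard, ha]

/-- The Frobenius interchanges the two points above `a` over the algebraic closure. -/
lemma X_sub_C_sq_dvd_norm_of_forall_not_equation {a : F} (ha : ∀ b, ¬E.Equation a b) :
    (X - C a) ^ 2 ∣ Algebra.norm F[X] (mk E Y ^ Fintype.card F - conj E (mk E Y)) := by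
  obtain ⟨b, hb⟩ := exists_equation (E⁄(AlgebraicClosure F)) (algebraMap F _ a)
  have hne : b ^ Fintype.card F ≠ b := fun h ↦ by
    obtain ⟨c, rfl⟩ := exists_algebraMap_eq_of_pow_card_eq h
    exact ha c ((map_equation _ (algebraMap F _).injective ..).mp hb)
  have hpow := equation_pow_card hb
  rw [← map_pow, FiniteField.pow_card] at hpow
  have hnegY := (Y_eq_of_X_eq hpow hb rfl).resolve_left hne
  have hb' := (equation_neg ..).mpr hb
  refine X_sub_C_sq_dvd_norm (hb := hb) (hc := hb') (hnegY ▸ hne.symm) ?_ ?_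
  · rw [evalPoint_pow_card_sub_conj, hnegY, sub_self]
  · rw [evalPoint_pow_card_sub_conj, ← negY_pow_card, ← map_pow, FiniteField.pow_card, hnegY,
      sub_self]

lemma X_sub_C_pow_two_sub_fiberCard_dvd_norm (a : F) :
    (X - C a) ^ (2 - fiberCard E a) ∣
      Algebra.norm F[X] (mk E Y ^ Fintype.card F - conj E (mk E Y)) := by
  by_cases ha : ∃ b, E.Equation a b
  · obtain ⟨b, hb⟩ := ha
    rw [fiberCard, setOf_equation_eq_pair hb]
    by_cases hneg : b = E.negY a b
    · rw [← hneg, Set.pair_eq_singleton, Set.ncard_singleton, pow_one]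
      have hb' : (E⁄F).Equation (algebraMap F F a) b := hb
      refine X_sub_C_dvd_norm (h := hb') ?_
      rw [evalPoint_pow_card_sub_conj, FiniteField.pow_card]
      exact sub_eq_zero.mpr hneg
    · rw [Set.ncard_pair hneg]
      exact one_dvd _
  · push Not at ha
    simpa [fiberCard, ha] using X_sub_C_sq_dvd_norm_of_forall_not_equation ha

end Divisibility

end Frobenius

/-! ### Points over the function field -/

section Points

variable {F : Type*} [Field F] {E : Affine F}

lemma algebraMap_X_pow_card_ne [Fintype F] :
    algebraMap E.CoordinateRing E.FunctionField (algebraMap F[X] _ X ^ Fintype.card F) ≠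
      algebraMap E.CoordinateRing E.FunctionField (algebraMap F[X] _ X) := fun h ↦ by
  rw [← map_pow] at h
  exact FiniteField.X_pow_card_sub_X_ne_zero F Fintype.one_lt_card <| sub_eq_zero.mpr <|
    FaithfulSMul.algebraMap_injective F[X] _ (FaithfulSMul.algebraMap_injective _ _ h)

variable [E.IsElliptic]

/-- The point over the function field with given coordinates in the coordinate ring. -/
noncomputable def functionFieldPoint {a b : E.CoordinateRing}
    (h : (E⁄E.CoordinateRing).Equation a b) : (E⁄E.FunctionField).Point :=
  Point.mk (h.baseChange (IsScalarTower.toAlgHom F E.CoordinateRing E.FunctionField))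

variable {a b : E.CoordinateRing} (h : (E⁄E.CoordinateRing).Equation a b)

lemma neg_functionFieldPoint :
    -functionFieldPoint h = functionFieldPoint ((equation_neg ..).mpr h) := by
  simp only [functionFieldPoint, Point.mk, Point.neg_some, ← baseChange_negY,
    IsScalarTower.coe_toAlgHom']

lemma xRep_functionFieldPoint :
    (functionFieldPoint h).xRep = ![algebraMap _ E.FunctionField a, 1] :=
  rfl

lemma hasHeight_xRep_functionFieldPoint {n : ℕ} {b : E.CoordinateRing}
    (h : (E⁄E.CoordinateRing).Equation (algebraMap F[X] _ X ^ n) b) :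
    HasHeight F (functionFieldPoint h).xRep n := by
  rw [xRep_functionFieldPoint, map_pow, ← IsScalarTower.algebraMap_apply]
  exact .X_pow n

variable (E) in
/-- The generic point `(X, Y)`. -/
noncomputable def tautologicalPoint : (E⁄E.FunctionField).Point :=
  functionFieldPoint (equation_mk_Y E)

lemma hasHeight_xRep_tautologicalPoint : HasHeight F (tautologicalPoint E).xRep 1 := by
  rw [tautologicalPoint, xRep_functionFieldPoint, ← IsScalarTower.algebraMap_apply]
  simpa only [pow_one] using HasHeight.X_pow (F := F) (K := E.FunctionField) 1

variable [Fintype F]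

variable (E) in
/-- The image `(X ^ q, Y ^ q)` of the generic point under the Frobenius endomorphism. -/
noncomputable def frobeniusPoint : (E⁄E.FunctionField).Point :=
  functionFieldPoint (equation_pow_card (equation_mk_Y E))

open scoped Classical in
lemma map_addXNumerator_eq_smul_xRep {η : E.CoordinateRing}
    (hη : (E⁄E.CoordinateRing).Equation (algebraMap F[X] _ X) η) :
    algebraMap F[X] E.FunctionField ∘ ![addXNumerator η, (X ^ Fintype.card F - X) ^ 2] =
      algebraMap F[X] E.FunctionField ((X ^ Fintype.card F - X) ^ 2) •
        (frobeniusPoint E + functionFieldPoint hη).xRep := by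
  have hX := algebraMap_X_pow_card_ne (E := E)
  rw [← IsScalarTower.coe_toAlgHom' F] at hX
  have hadd := addX_slope_mul_sq ((equation_pow_card (equation_mk_Y E)).baseChange _)
    (hη.baseChange _) hX
  have hnum := congr(algebraMap _ E.FunctionField $(algebraMap_addXNumerator hη))
  rw [baseChange_negY, baseChange_negY] at hadd
  rw [frobeniusPoint, functionFieldPoint, functionFieldPoint, Point.mk, Point.mk,
    Point.add_of_X_ne hX, Point.xRep_some]
  funext i
  fin_cases i
  · simp only [map_add, map_mul, map_pow, map_sub, map_ofNat, IsScalarTower.coe_toAlgHom',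
      ← IsScalarTower.algebraMap_apply, baseChange_a₂, baseChange_a₄, baseChange_a₆,
      Fin.zero_eta, Function.comp_apply, Matrix.cons_val_zero, Pi.smul_apply,
      smul_eq_mul] at hadd hnum ⊢
    linear_combination hnum - hadd
  · simp

open scoped Classical in
lemma exists_hasHeight_xRep_frobeniusPoint_add {η : E.CoordinateRing}
    (hη : (E⁄E.CoordinateRing).Equation (algebraMap F[X] _ X) η) {n : F → ℕ} (hn : ∀ a, n a ≤ 2)
    (hdvd : ∀ a, (X - C a) ^ n a ∣ Algebra.norm F[X] (mk E Y ^ Fintype.card F - η)) :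
    ∃ k, HasHeight F (frobeniusPoint E + functionFieldPoint hη).xRep k ∧
      k + ∑ a, n a ≤ 2 * Fintype.card F + 1 := by
  have hq := Fintype.one_lt_card (α := F)
  have hden : (X ^ Fintype.card F - X : F[X]) ^ 2 ≠ 0 :=
    pow_ne_zero 2 (FiniteField.X_pow_card_sub_X_ne_zero F hq)
  have hden_dvd (a : F) : (X - C a) ^ n a ∣ (X ^ Fintype.card F - X) ^ 2 :=
    (pow_dvd_pow _ (hn a)).trans (pow_dvd_pow_of_dvd (X_sub_C_dvd_X_pow_card_sub_X a) 2)
  have hnum_dvd (a : F) : (X - C a) ^ n a ∣ addXNumerator η := by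
    rw [addXNumerator_eq_neg_norm_sub hη]
    exact dvd_sub (hdvd a).neg_right ((hden_dvd a).mul_left _)
  obtain ⟨k, hk⟩ := exists_hasHeight (K := E.FunctionField)
    (v := ![addXNumerator η, (X ^ Fintype.card F - X) ^ 2]) fun h ↦ hden (congrFun h 1)
  refine ⟨k, .of_smul ((map_ne_zero_iff _ (FaithfulSMul.algebraMap_injective ..)).mpr hden)
    (map_addXNumerator_eq_smul_xRep hη ▸ hk), ?_⟩
  rw [← natDegree_prod_X_sub_C_pow]
  refine hk.add_natDegree_le
    (Fin.forall_fin_two.mpr ⟨prod_X_sub_C_pow_dvd hnum_dvd, prod_X_sub_C_pow_dvd hden_dvd⟩)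
    (Fin.forall_fin_two.mpr ⟨natDegree_addXNumerator_le hη, ?_⟩)
  calc ((X ^ Fintype.card F - X : F[X]) ^ 2).natDegree = 2 * Fintype.card F := by
        rw [natDegree_pow, FiniteField.X_pow_card_sub_X_natDegree_eq F hq]
    _ ≤ 2 * Fintype.card F + 1 := Nat.le_succ _

open scoped Classical in
/-- The upper bounds for the heights of the sum and of the difference add up to the value prescribed
by the parallelogram law, so both are attained. -/
lemma hasHeight_xRep_frobeniusPoint_add : ∃ r,
    HasHeight F (frobeniusPoint E + tautologicalPoint E).xRep r ∧
      r + Nat.card E.Point = 2 * (Fintype.card F + 1) := by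
  have hneg := (equation_neg ..).mpr (equation_mk_Y E)
  obtain ⟨m, hm, hm_le⟩ := exists_hasHeight_xRep_frobeniusPoint_add (equation_mk_Y E)
    (fiberCard_le_two E) X_sub_C_pow_fiberCard_dvd_norm
  obtain ⟨n, hn, hn_le⟩ := exists_hasHeight_xRep_frobeniusPoint_add hneg
    (fun a ↦ Nat.sub_le 2 (fiberCard E a)) fun a ↦ by
      rw [← conj_mk_Y]
      exact X_sub_C_pow_two_sub_fiberCard_dvd_norm a
  rw [← neg_functionFieldPoint (equation_mk_Y E), ← sub_eq_add_neg] at hn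
  obtain ⟨k, hk, hkn⟩ := HasHeight.xRep_parallelogram (hasHeight_xRep_functionFieldPoint _)
    hasHeight_xRep_tautologicalPoint hn
  obtain rfl := hk.unique hm
  have hsum : ∑ a, fiberCard E a + ∑ a, (2 - fiberCard E a) = 2 * Fintype.card F := by
    rw [← Finset.sum_add_distrib, Finset.sum_congr rfl fun a _ ↦
      Nat.add_sub_cancel' (fiberCard_le_two E a), Finset.sum_const, smul_eq_mul, mul_comm]
    rfl
  refine ⟨k, hm, ?_⟩
  rw [← one_add_sum_fiberCard]
  omega

end Points

/-- **Hasse bound**: for an elliptic curve `E` over the finite field `𝔽_q` with `q` elements,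
if `N_q = #E(𝔽_q)` and `a = q + 1 - N_q`, then `a² ≤ 4q`. -/
theorem hasse_bound (F : Type) [Field F] [Fintype F] (E : WeierstrassCurve F) [E.IsElliptic] :
    ((Fintype.card F : ℤ) + 1 - (Nat.card E.toAffine.Point : ℤ)) ^ 2
      ≤ 4 * (Fintype.card F : ℤ) := by
  classical
  obtain ⟨r, hr, hcard⟩ := hasHeight_xRep_frobeniusPoint_add (E := E.toAffine)
  have h := sq_le_four_mul_of_hasHeight_xRep hasHeight_xRep_tautologicalPoint
    (hasHeight_xRep_functionFieldPoint _) hr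
  have hr' : (r : ℤ) - 1 - Fintype.card F = Fintype.card F + 1 - Nat.card E.toAffine.Point := by
    omega
  rwa [hr'] at h
end
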